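/- Let K = ℂ((t)) be the field of formal Laurent series over ℂ, let n ≥ 2, and let f ∈ K[X_1,…,X_n] be an irreducible polynomial of total degree d ≥ 1, so that X(K) = {x ∈ K^n : f(x) = 0} is an irreducible hypersurface of dimension n−1 and degree d. Then for every positive integer r, the Zariski closure of X_r = X(K) ∩ (ℂ[t]_{<r})^n in ℂ^{nr} has dimension at most r·(n−2) + ⌈r/d⌉; that is, there exists an ideal J of ℂ[Y_1,…,Y_{nr}] such that every point of X_r is a common zero of J and the Krull dimension of ℂ[Y_1,…,Y_{nr}]/J is at most r·(n−2) + ⌈r/d⌉. -/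

import Mathlib

set_option maxSynthPendingDepth 3

/-!
Write `K = ℂ((t))`, `n = m + 2` and `α = ⌈r/d⌉`. The ideal `J` is generated by the `t`-coefficients
of `f(∑ⱼ Y₁ⱼ tʲ, …, ∑ⱼ Yₙⱼ tʲ)`. For a prime `P ⊇ J`, let `L` be the fraction field of `ℂ[Y]/P`. By
Noether normalization it is enough to bound the transcendence degree of `L` over `ℂ`
(`ringKrullDim_le_of_trdeg_le`, `ringKrullDim_quotient_le_of_forall_prime`). The series
`xᵢ = ∑ⱼ Yᵢⱼ tʲ ∈ L((t))` are polynomials in `t` of degree `< r`, they satisfy `f(x) = 0`, and their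
coefficients generate `L`; the bound `trdeg L ≤ r m + α` is `generic_point`.

Suppose that `trdeg L > r m + α`. Then any `r m + α` elements of `L` are killed by a non-zero
derivation of `L` over `ℂ` (`exists_derivation_killing`), and such a derivation acts coefficientwise
on `L((t))` (`coeffDer`), vanishing on `K`. A linear change of coordinates replaces
`x₁, …, x_{m+1}` by `T₀, …, T_m` such that `y = x₀` is algebraic over `K(T)`, of degree `d` if the
`Tᵢ` are algebraically independent over `K` (`exists_projection`). If they are dependent, some `Tᵢ`
is algebraic over the others; a derivation killing the `r m` coefficients of the others kills every
`Tᵢ`, hence `y`, hence `L`, a contradiction. If they are independent, a Bertini theorem (`bertini`)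
gives `ℓᵢ = Tᵢ + cᵢ T₀` (`1 ≤ i ≤ m`) such that `Z = K(ℓ₁, …, ℓ_m)` is algebraically closed in
`F = K(T, y)`, a field of transcendence degree one over `Z`.

The determinant method (`core`) is applied to the monomials `T₀ᵃ yᵇ`, `a < M`, `b < d`, which are
linearly independent over `Z`. Choose `u ∈ F ∩ L[[t]]` whose residue is transcendental over the
residues of `Z` (`exists_residually_transcendental`), and a coefficientwise derivation `δ ≠ 0`
killing the coefficients of the `ℓᵢ`, hence `Z`, and the first `α` coefficients of `u`. Residues of
`F ∩ L[[t]]` are algebraic over those of `Z` and of `u`, and an inductive argument on the power of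
`t` (`trap`) shows that `δ u` divides `δ w` for all `w ∈ F ∩ L[[t]]`. Thus `∂ = δ / δ u` preserves
`F ∩ L[[t]]`. It also preserves `F`, and its constants in `F` are the elements of `Z`, so that the
Wronskian of the `N = M d` monomials with respect to `∂` is a non-zero power series. Their Wronskian
with respect to `δ` is the same series multiplied by `(δ u) ^ (N (N - 1) / 2)`. It is therefore
non-zero and divisible by `t ^ (α N (N - 1) / 2)`; but it is a polynomial in `t` of degree at most
`(r - 1) ∑ (a + b)`. For large `M` this compares `α d² M² / 2` with `(r - 1) d M² / 2`, and
`α d ≥ r` gives the contradiction.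
-/

/-- The Laurent series `∑_{i<r} a_i t^i` associated to a tuple of coefficients
`a ∈ ℂ^r`, i.e. the element of `ℂ((t))` corresponding to a polynomial of
degree `< r`. -/
noncomputable def seriesOfCoeffs (r : ℕ) (a : Fin r → ℂ) : LaurentSeries ℂ :=
  ∑ i : Fin r, HahnSeries.single (i : ℤ) (a i)

/-! ### Derivations and Wronskians -/

/-- Absolute derivations of a commutative ring. Fixing the `ℤ`-algebra structure to be the
canonical one avoids the non-canonical `ℤ`-algebra instances found on rings of Laurent series. -/
abbrev AbsDer (R : Type*) [CommRing R] := Derivation ℤ R R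

/-- An additive endomorphism satisfying the Leibniz rule is a derivation. -/
def AbsDer.mk {R : Type*} [CommRing R] (f : R →+ R) (h : ∀ a b, f (a * b) = a * f b + b * f a) :
    AbsDer R :=
  Derivation.mk' f.toIntLinearMap h

@[simp] lemma AbsDer.mk_apply {R : Type*} [CommRing R] (f : R →+ R)
    (h : ∀ a b, f (a * b) = a * f b + b * f a) (a : R) : AbsDer.mk f h a = f a := rfl

lemma AbsDer.map_mul {R : Type*} [CommRing R] (δ : AbsDer R) (a b : R) :
    δ (a * b) = a * δ b + b * δ a := by
  rw [Derivation.leibniz, smul_eq_mul, smul_eq_mul]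

lemma AbsDer.map_pow {R : Type*} [CommRing R] (δ : AbsDer R) (a : R) (n : ℕ) :
    δ (a ^ n) = n * (a ^ (n - 1) * δ a) := by
  rw [Derivation.leibniz_pow, smul_eq_mul, nsmul_eq_mul]

lemma AbsDer.map_natCast {R : Type*} [CommRing R] (δ : AbsDer R) (n : ℕ) : δ n = 0 :=
  Derivation.map_natCast δ n

/-- Chain rule for `q(w)`, where the coefficients of `q` need not be constants. -/
lemma AbsDer.eval {R : Type*} [CommRing R] (δ : AbsDer R) (q : Polynomial R) (w : R) :
    δ (q.eval w) = q.derivative.eval w * δ w +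
      ∑ i ∈ Finset.range (q.natDegree + 1), δ (q.coeff i) * w ^ i := by
  rw [Polynomial.eval_eq_sum_range, map_sum, Polynomial.derivative_eval,
    Polynomial.sum_over_range _ (by simp), Finset.sum_mul, ← Finset.sum_add_distrib]
  refine Finset.sum_congr rfl fun i _ => ?_
  rw [AbsDer.map_mul, AbsDer.map_pow]
  ring

/-- If the `m i` satisfy no non-trivial relation whose coefficients are constants of `F`, then the
first `|s|` derivatives of the `m i`, `i ∈ s`, satisfy no common non-trivial relation with
coefficients in `F`. -/
lemma wronskian_aux {k Ω ι : Type*} [Field k] [Field Ω] [Algebra k Ω] [DecidableEq ι]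
    (δ : AbsDer Ω) (F : IntermediateField k Ω) (hF : ∀ w ∈ F, δ w ∈ F) (m : ι → Ω)
    (hm : ∀ (s : Finset ι) (c : ι → Ω), (∀ i, c i ∈ F) → (∀ i ∈ s, δ (c i) = 0) →
      ∑ i ∈ s, c i * m i = 0 → ∀ i ∈ s, c i = 0) :
    ∀ (N : ℕ) (s : Finset ι) (v : ι → Ω), s.card = N → (∀ i, v i ∈ F) →
      (∀ j < s.card, ∑ i ∈ s, v i * δ^[j] (m i) = 0) → ∀ i ∈ s, v i = 0 := by
  intro N
  induction N with
  | zero =>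
    intro s v hs _ _ i hi
    simp [Finset.card_eq_zero.mp hs] at hi
  | succ N ih =>
    intro s v hs hv h0
    by_contra! hne
    obtain ⟨i₀, hi₀, hvi₀⟩ := hne
    -- after normalising `v i₀ = 1`, differentiating the relations removes the index `i₀`
    set w : ι → Ω := fun i => v i / v i₀ with hw
    have hwF : ∀ i, w i ∈ F := fun i => F.div_mem (hv i) (hv i₀)
    have hw1 : w i₀ = 1 := div_self hvi₀
    have hw0 : ∀ j < s.card, ∑ i ∈ s, w i * δ^[j] (m i) = 0 := by
      intro j hj
      have := h0 j hj
      have h2 : ∑ i ∈ s, w i * δ^[j] (m i) = (∑ i ∈ s, v i * δ^[j] (m i)) / v i₀ := by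
        rw [Finset.sum_div]
        exact Finset.sum_congr rfl fun i _ => by simp only [hw]; ring
      rw [h2, this, zero_div]
    have hcard : (s.erase i₀).card = N := by rw [Finset.card_erase_of_mem hi₀, hs]; rfl
    have hder : ∀ i ∈ s.erase i₀, δ (w i) = 0 := by
      refine ih (s.erase i₀) (fun i => δ (w i)) hcard (fun i => hF _ (hwF i)) ?_
      intro j hj
      rw [hcard] at hj
      have h1 := hw0 j (by omega)
      have h2 := hw0 (j + 1) (by omega)
      have h3 := congrArg δ h1
      rw [map_sum, map_zero] at h3
      have h4 : ∑ i ∈ s, δ (w i) * δ^[j] (m i) = 0 := by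
        have h5 : ∑ i ∈ s, δ (w i * δ^[j] (m i)) =
            ∑ i ∈ s, w i * δ^[j + 1] (m i) + ∑ i ∈ s, δ (w i) * δ^[j] (m i) := by
          rw [← Finset.sum_add_distrib]
          refine Finset.sum_congr rfl fun i _ => ?_
          rw [Derivation.leibniz, Function.iterate_succ_apply', smul_eq_mul, smul_eq_mul]
          ring
        rw [h5, h2, zero_add] at h3
        exact h3
      rw [← Finset.add_sum_erase s _ hi₀, hw1] at h4
      simpa using h4
    have hconst : ∀ i ∈ s, δ (w i) = 0 := by
      intro i hi
      by_cases h : i = i₀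
      · rw [h, hw1]; simp
      · exact hder i (Finset.mem_erase.mpr ⟨h, hi⟩)
    have := hm s w hwF hconst (by simpa using hw0 0 (by omega)) i₀ hi₀
    rw [hw1] at this
    exact one_ne_zero this

/-- Wronskian criterion: elements of a differential subfield `F` that are linearly independent
over the constants of `F` have a non-zero Wronskian determinant. -/
lemma wronskian_det_ne_zero {k Ω : Type*} [Field k] [Field Ω] [Algebra k Ω]
    (δ : AbsDer Ω) (F : IntermediateField k Ω) (hF : ∀ w ∈ F, δ w ∈ F) {μ : ℕ}
    (m : Fin μ → Ω) (hmF : ∀ i, m i ∈ F)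
    (hm : ∀ c : Fin μ → Ω, (∀ i, c i ∈ F) → (∀ i, δ (c i) = 0) →
      ∑ i, c i * m i = 0 → ∀ i, c i = 0) :
    (Matrix.of fun i j : Fin μ => δ^[(i : ℕ)] (m j)).det ≠ 0 := by
  have hit : ∀ (j : ℕ) (i : Fin μ), δ^[j] (m i) ∈ F := by
    intro j i
    induction j with
    | zero => exact hmF i
    | succ j ih => rw [Function.iterate_succ_apply']; exact hF _ ih
  let A : Matrix (Fin μ) (Fin μ) F := Matrix.of fun i j => ⟨δ^[(i : ℕ)] (m j), hit _ _⟩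
  have hA : (Matrix.of fun i j : Fin μ => δ^[(i : ℕ)] (m j)).det = (A.det : Ω) := by
    rw [← IntermediateField.algebraMap_apply, RingHom.map_det]
    rfl
  rw [hA]
  intro h0
  have h1 : A.det = 0 := by exact_mod_cast h0
  obtain ⟨v, hv, hAv⟩ := Matrix.exists_mulVec_eq_zero_iff.mpr h1
  apply hv
  funext i
  have := wronskian_aux δ F hF m (fun s c hc hd hs => by
    have h := hm (fun i => if i ∈ s then c i else 0)
      (fun i => by split_ifs; exacts [hc i, F.zero_mem])
      (fun i => by split_ifs with h; exacts [hd i h, map_zero _])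
      (Eq.trans (by simp [Finset.sum_ite_mem]) hs)
    intro i hi
    simpa [hi] using h i) μ Finset.univ (fun i => (v i : Ω)) (by simp) (fun i => (v i).2) (by
      intro j hj
      rw [Finset.card_univ, Fintype.card_fin] at hj
      have h := congrArg (fun w : Fin μ → F => (w ⟨j, hj⟩ : Ω)) hAv
      simp only [Matrix.mulVec, dotProduct, Pi.zero_apply] at h
      push_cast at h
      rw [← h]
      exact Finset.sum_congr rfl fun i _ => by simp [A, mul_comm]) i (Finset.mem_univ i)
  exact_mod_cast this

/-- The Wronskian of `h • ∂` is the Wronskian of `∂` multiplied by the power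
`h ^ (0 + 1 + ⋯ + (μ - 1))`. -/
lemma wronskian_scale {Ω : Type*} [Field Ω]
    (δ : AbsDer Ω) (h : Ω) {μ : ℕ} (m : Fin μ → Ω) :
    (Matrix.of fun i j : Fin μ => (h • δ : AbsDer Ω)^[(i : ℕ)] (m j)).det =
      (∏ i : Fin μ, h ^ (i : ℕ)) * (Matrix.of fun i j : Fin μ => δ^[(i : ℕ)] (m j)).det := by
  -- `(h∂)^i = ∑_{l ≤ i} c i l ∂^l` with `c i i = h ^ i`
  have key : ∀ i : ℕ, ∃ c : ℕ → Ω, c i = h ^ i ∧ (∀ l, i < l → c l = 0) ∧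
      ∀ w, (h • δ : AbsDer Ω)^[i] w = ∑ l ∈ Finset.range (i + 1), c l * δ^[l] w := by
    intro i
    induction i with
    | zero => exact ⟨fun l => if l = 0 then 1 else 0, by simp, fun l hl => by simp; omega, by simp⟩
    | succ i ih =>
      obtain ⟨c, hc1, hc2, hc3⟩ := ih
      refine ⟨fun l => h * (δ (c l) + if l = 0 then 0 else c (l - 1)), ?_, ?_, ?_⟩
      · simp [hc2 (i + 1) (by omega), hc1, pow_succ, mul_comm]
      · intro l hl
        simp [hc2 l (by omega), show l ≠ 0 by omega, hc2 (l - 1) (by omega)]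
      · intro w
        rw [Function.iterate_succ_apply', hc3, Derivation.smul_apply, map_sum, smul_eq_mul]
        simp only [Derivation.leibniz, smul_eq_mul, ← Function.iterate_succ_apply' (f := δ)]
        simp only [mul_assoc, add_mul]
        rw [← Finset.mul_sum, Finset.sum_add_distrib, Finset.sum_add_distrib, add_comm]
        congr 2
        · rw [Finset.sum_range_succ _ (i + 1), hc2 (i + 1) (by omega)]
          simp [mul_comm]
        · rw [Finset.sum_range_succ' _ (i + 1)]
          simp
  choose c hc1 hc2 hc3 using key
  have hmul : (Matrix.of fun i j : Fin μ => (h • δ : AbsDer Ω)^[(i : ℕ)] (m j)) =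
      (Matrix.of fun i l : Fin μ => c i l) * (Matrix.of fun i j : Fin μ => δ^[(i : ℕ)] (m j)) := by
    ext i j
    rw [Matrix.mul_apply]
    simp only [Matrix.of_apply]
    rw [hc3, Fin.sum_univ_eq_sum_range (fun l => c i l * δ^[l] (m j)) μ]
    refine Finset.sum_subset (Finset.range_mono (by omega)) fun l _ hl => ?_
    rw [hc2 i l (by simpa using hl), zero_mul]
  rw [hmul, Matrix.det_mul, Matrix.det_of_isLowerTriangular]
  · simp [hc1]
  · intro i j hij
    exact hc2 i j hij

/-! ### Coefficientwise derivations of Laurent series -/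

/-- The derivation of `L((t))` obtained by applying a derivation of `L` to each coefficient. -/
noncomputable def coeffDer {k L : Type*} [Field k] [Field L] [Algebra k L] (D : Derivation k L L) :
    AbsDer (LaurentSeries L) :=
  AbsDer.mk
    { toFun := fun w => HahnSeries.map w D
      map_zero' := by ext; simp
      map_add' := fun a b => by ext; simp }
    (fun a b => by
      ext n
      have hb : (HahnSeries.map b D).support ⊆ b.support := fun i hi hb => hi (by simp [hb])
      have ha : (HahnSeries.map a D).support ⊆ a.support := fun i hi hb => hi (by simp [hb])
      change D ((a * b).coeff n) = (a * HahnSeries.map b D + b * HahnSeries.map a D).coeff n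
      rw [HahnSeries.coeff_add, mul_comm b, HahnSeries.coeff_mul,
        HahnSeries.coeff_mul_right' b.isPWO_support hb,
        HahnSeries.coeff_mul_left' a.isPWO_support ha, map_sum, ← Finset.sum_add_distrib]
      exact Finset.sum_congr rfl fun i _ => by simp [mul_comm])

@[simp] lemma coeffDer_coeff {k L : Type*} [Field k] [Field L] [Algebra k L]
    (D : Derivation k L L) (w : LaurentSeries L) (n : ℤ) :
    (coeffDer D w).coeff n = D (w.coeff n) := rfl

/-- The derivation of `L[[t]]` obtained by applying a derivation of `L` to each coefficient. -/
noncomputable def psDer {k L : Type*} [Field k] [Field L] [Algebra k L] (D : Derivation k L L) :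
    AbsDer (PowerSeries L) :=
  AbsDer.mk
    { toFun := fun w => PowerSeries.mk fun n => D (PowerSeries.coeff n w)
      map_zero' := by ext; simp
      map_add' := fun a b => by ext; simp }
    (fun a b => by
      ext n
      change PowerSeries.coeff n (PowerSeries.mk fun n => D (PowerSeries.coeff n (a * b))) =
        PowerSeries.coeff n (a * (PowerSeries.mk fun n => D (PowerSeries.coeff n b)) +
          b * (PowerSeries.mk fun n => D (PowerSeries.coeff n a)))
      rw [map_add, mul_comm b]
      simp only [PowerSeries.coeff_mk, PowerSeries.coeff_mul]
      rw [map_sum, ← Finset.sum_add_distrib]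
      exact Finset.sum_congr rfl fun i _ => by simp [mul_comm])

@[simp] lemma psDer_coeff {k L : Type*} [Field k] [Field L] [Algebra k L]
    (D : Derivation k L L) (w : PowerSeries L) (n : ℕ) :
    PowerSeries.coeff n (psDer D w) = D (PowerSeries.coeff n w) := by
  change PowerSeries.coeff n (PowerSeries.mk fun n => D (PowerSeries.coeff n w)) = _
  simp

lemma coeffDer_ofPowerSeries {k L : Type*} [Field k] [Field L] [Algebra k L]
    (D : Derivation k L L) (w : PowerSeries L) :
    coeffDer D (HahnSeries.ofPowerSeries ℤ L w) = HahnSeries.ofPowerSeries ℤ L (psDer D w) := by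
  ext n
  rw [coeffDer_coeff, PowerSeries.coeff_coe, PowerSeries.coeff_coe]
  split_ifs <;> simp

lemma psDer_X {k L : Type*} [Field k] [Field L] [Algebra k L] (D : Derivation k L L) :
    psDer D (PowerSeries.X : PowerSeries L) = 0 := by
  ext n
  rw [psDer_coeff, PowerSeries.coeff_X]
  split_ifs <;> simp

/-- Integrality bootstrapping. Let `V ⊆ L[[t]]` be a saturated subring and `δ` a derivation with
`δ t = 0`. If every residue of `V` is algebraic over the residues of the subring
`{w ∈ V | t ^ a ∣ δ w}`, then that subring is all of `V`: the relation `q(w) ∈ tV`, with `q`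
separable at the residue of `w`, expresses `δ w` modulo `t ^ a` as an element of `t δ(V)`. -/
lemma trap {L : Type*} [Field L] [CharZero L]
    (δ : AbsDer (PowerSeries L)) (hδ : δ PowerSeries.X = 0)
    (V : Subring (PowerSeries L))
    (hV : ∀ w, PowerSeries.X * w ∈ V → w ∈ V) (a : ℕ)
    (H : ∀ w ∈ V, ∃ q : Polynomial (PowerSeries L),
      (∀ i, q.coeff i ∈ V ∧ PowerSeries.X ^ a ∣ δ (q.coeff i)) ∧
      q.map PowerSeries.constantCoeff ≠ 0 ∧
      (q.map PowerSeries.constantCoeff).eval (PowerSeries.constantCoeff w) = 0) :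
    ∀ w ∈ V, PowerSeries.X ^ a ∣ δ w := by
  have main : ∀ j ≤ a, ∀ w ∈ V, PowerSeries.X ^ j ∣ δ w := by
    intro j
    induction j with
    | zero => intro _ w _; simp
    | succ j ih =>
      intro hj w hw
      -- choose `q` of minimal degree among the polynomials provided by `H`
      classical
      have hex : ∃ n, ∃ q : Polynomial (PowerSeries L),
          (∀ i, q.coeff i ∈ V ∧ PowerSeries.X ^ a ∣ δ (q.coeff i)) ∧
          q.map PowerSeries.constantCoeff ≠ 0 ∧
          (q.map PowerSeries.constantCoeff).eval (PowerSeries.constantCoeff w) = 0 ∧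
          (q.map PowerSeries.constantCoeff).natDegree = n := by
        obtain ⟨q, h1, h2, h3⟩ := H w hw
        exact ⟨_, q, h1, h2, h3, rfl⟩
      obtain ⟨q, h1, h2, h3, h4⟩ := Nat.find_spec hex
      have hdeg : (q.map PowerSeries.constantCoeff).natDegree ≠ 0 := by
        intro h0
        rw [Polynomial.eq_C_of_natDegree_eq_zero h0] at h2 h3
        rw [Polynomial.eval_C] at h3
        exact h2 (by rw [h3, Polynomial.C_0])
      have hsep : (q.derivative.map PowerSeries.constantCoeff).eval
          (PowerSeries.constantCoeff w) ≠ 0 := by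
        intro h0
        have hd : (q.derivative.map PowerSeries.constantCoeff).natDegree < Nat.find hex := by
          rw [← h4, ← Polynomial.derivative_map]
          exact Polynomial.natDegree_derivative_lt hdeg
        refine Nat.find_min hex hd ⟨q.derivative, ?_, ?_, h0, rfl⟩
        · intro i
          rw [Polynomial.coeff_derivative]
          have hc : ((i : PowerSeries L) + 1) = ((i + 1 : ℕ) : PowerSeries L) := by push_cast; rfl
          rw [hc]
          refine ⟨V.mul_mem (h1 _).1 (natCast_mem V _), ?_⟩
          rw [AbsDer.map_mul, AbsDer.map_natCast, mul_zero, zero_add]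
          exact (h1 _).2.mul_left _
        · rw [← Polynomial.derivative_map]
          intro h
          exact hdeg (Polynomial.derivative_eq_zero.mp h)
      have hunit : IsUnit (q.derivative.eval w) := by
        rw [PowerSeries.isUnit_iff_constantCoeff, isUnit_iff_ne_zero]
        rwa [Polynomial.eval_map, Polynomial.eval₂_hom] at hsep
      have hqw : PowerSeries.X ∣ q.eval w := by
        rw [PowerSeries.X_dvd_iff]
        rwa [Polynomial.eval_map, Polynomial.eval₂_hom] at h3
      obtain ⟨w', hw'⟩ := hqw
      have hw'V : w' ∈ V := by
        refine hV _ ?_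
        rw [← hw', Polynomial.eval_eq_sum_range]
        exact V.sum_mem fun i _ => V.mul_mem (h1 i).1 (V.pow_mem hw i)
      -- differentiate `q(w) = t w'`
      have hder := δ.eval q w
      have hd1 : PowerSeries.X ^ (j + 1) ∣
          ∑ i ∈ Finset.range (q.natDegree + 1), δ (q.coeff i) * w ^ i :=
        Finset.dvd_sum fun i _ => ((pow_dvd_pow _ hj).trans (h1 i).2).mul_right _
      have hd2 : PowerSeries.X ^ (j + 1) ∣ δ (q.eval w) := by
        rw [hw', AbsDer.map_mul, hδ, mul_zero, add_zero, pow_succ']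
        exact mul_dvd_mul_left _ (ih (by omega) w' hw'V)
      rw [hder] at hd2
      exact (hunit.dvd_mul_left).mp ((dvd_add_left hd1).mp hd2)
  exact main a le_rfl

/-! ### Derivations and transcendence degree -/

open KaehlerDifferential in
/-- In characteristic zero, a transcendental element is not killed by all derivations. -/
lemma exists_derivation_ne_zero {k L : Type*} [Field k] [Field L] [CharZero k] [Algebra k L]
    (a : L) (ha : Transcendental k a) : ∃ D : Derivation k L L, D a ≠ 0 := by
  have hs : AlgebraicIndepOn k id ({a} : Set L) := by
    have := (algebraicIndependent_singleton_iff (R := k) (x := fun i : ({a} : Set L) => (i : L))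
      ⟨a, rfl⟩).mpr ha
    exact this
  obtain ⟨t, hat, ht⟩ := exists_isTranscendenceBasis_superset hs
  have hat : a ∈ t := hat rfl
  let S := MvPolynomial t k
  let : Algebra S L := (MvPolynomial.aeval (fun i : t => (i : L))).toAlgebra
  have hSL : ∀ p : S, algebraMap S L p = MvPolynomial.aeval (fun i : t => (i : L)) p := fun _ => rfl
  have : IsScalarTower k S L := IsScalarTower.of_algebraMap_eq fun c => by
    rw [hSL, MvPolynomial.algebraMap_eq, MvPolynomial.aeval_C]
  have : FaithfulSMul S L := (faithfulSMul_iff_algebraMap_injective S L).mpr ht.1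
  let := FractionRing.liftAlgebra S L
  have := FractionRing.isScalarTower_liftAlgebra S L
  have : Algebra.IsAlgebraic S L := by
    have := ht.isAlgebraic
    refine ⟨fun x => ?_⟩
    have hx := Algebra.IsAlgebraic.isAlgebraic
      (R := Algebra.adjoin k (Set.range fun i : t => (i : L))) x
    refine IsAlgebraic.of_ringHom_of_comp_eq (R := S) (ht.1.aevalEquiv.toAlgHom.toRingHom)
      (RingHom.id L) hx ht.1.aevalEquiv.surjective Function.injective_id ?_
    ext p <;> simp [hSL, S]
  have : Algebra.IsAlgebraic (FractionRing S) L :=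
    (IsFractionRing.comap_isAlgebraic_iff (A := S) (K := FractionRing S) (C := L)).mp inferInstance
  have : CharZero (FractionRing S) := charZero_of_injective_algebraMap (R := k) (algebraMap k (FractionRing S)).injective
  have : Algebra.FormallyEtale (FractionRing S) L := Algebra.FormallyEtale.of_isSeparable _ _
  have : Algebra.FormallyEtale S (FractionRing S) :=
    Algebra.FormallyEtale.of_isLocalization (nonZeroDivisors S)
  have : Algebra.FormallyEtale S L := Algebra.FormallyEtale.comp S (FractionRing S) L
  let g : Ω[S⁄k] →ₗ[S] L :=
    (Algebra.linearMap S L).comp ((mvPolynomialBasis k t).coord ⟨a, hat⟩)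
  let h : Ω[L⁄k] →ₗ[L] L :=
    (LinearMap.liftBaseChange L g).comp (tensorKaehlerEquivOfFormallyEtale k S L).symm.toLinearMap
  refine ⟨h.compDer (D k L), ?_⟩
  have h1 : algebraMap S L (MvPolynomial.X ⟨a, hat⟩) = a := by rw [hSL, MvPolynomial.aeval_X]
  have h2 := tensorKaehlerEquivOfFormallyEtale_symm_D_algebraMap k S L (MvPolynomial.X ⟨a, hat⟩)
  rw [h1] at h2
  have : h (D k L a) = 1 := by
    simp only [h, g, LinearMap.comp_apply, LinearEquiv.coe_coe, h2, LinearMap.liftBaseChange_tmul]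
    rw [Module.Basis.coord_apply, mvPolynomialBasis_repr_D_X]
    simp
  simp [this]

open scoped IntermediateField.algebraAdjoinAdjoin in
/-- Fewer than `trdeg` elements are simultaneously killed by some non-zero derivation. -/
lemma exists_derivation_killing {k L : Type*} [Field k] [Field L] [CharZero k] [Algebra k L]
    (S : Set L) (hS : Cardinal.mk S < Algebra.trdeg k L) :
    ∃ D : Derivation k L L, (∀ s ∈ S, D s = 0) ∧ D ≠ 0 := by
  have : ¬ Algebra.IsAlgebraic (IntermediateField.adjoin k S) L := by
    intro h
    have : Algebra.IsAlgebraic (Algebra.adjoin k S) L := by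
      exact (IsFractionRing.comap_isAlgebraic_iff (A := Algebra.adjoin k S) (K := IntermediateField.adjoin k S)).mpr h
    exact absurd (Algebra.IsAlgebraic.trdeg_le_cardinalMk k S (A := L)) (not_le.mpr hS)
  rw [Algebra.isAlgebraic_def] at this
  push Not at this
  obtain ⟨a, ha⟩ := this
  obtain ⟨D, hD⟩ := exists_derivation_ne_zero (k := IntermediateField.adjoin k S) a ha
  refine ⟨D.restrictScalars k, fun s hs => ?_, fun h => hD ?_⟩
  · exact D.map_algebraMap ⟨s, IntermediateField.subset_adjoin k S hs⟩
  · exact DFunLike.congr_fun h a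

/-! ### Bertini theorem for function fields -/

/-- A purely transcendental extension contains no new algebraic elements. -/
lemma mem_of_algebraic_of_mem_adjoin {k Ω ι : Type*} [Field k] [Field Ω] [Algebra k Ω]
    (W : ι → Ω) (hW : AlgebraicIndependent k W) (v : Ω)
    (hv : v ∈ IntermediateField.adjoin k (Set.range W)) (halg : IsAlgebraic k v) :
    v ∈ Set.range (algebraMap k Ω) := by
  obtain ⟨p, q, hpq⟩ := (IntermediateField.mem_adjoin_range_iff k W v).mp hv
  by_cases hq : MvPolynomial.aeval W q = 0
  · exact ⟨0, by rw [hpq, hq]; simp⟩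
  -- compare coefficients in `p - v q = 0` over `k(v)`, over which `W` is still independent
  have : Algebra.IsAlgebraic k (IntermediateField.adjoin k {v}) :=
    IntermediateField.isAlgebraic_adjoin_simple halg.isIntegral
  have hW' : AlgebraicIndependent (IntermediateField.adjoin k {v}) W := hW.extendScalars _
  let v' : IntermediateField.adjoin k {v} := ⟨v, IntermediateField.mem_adjoin_simple_self k v⟩
  let φ := algebraMap k (IntermediateField.adjoin k {v})
  have h0 : MvPolynomial.aeval W (p.map φ - MvPolynomial.C v' * q.map φ) = 0 := by
    have h1 : ∀ p : MvPolynomial ι k, MvPolynomial.aeval W (p.map φ) = MvPolynomial.aeval W p :=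
      fun p => MvPolynomial.aeval_map_algebraMap _ _ _
    rw [map_sub, map_mul, h1, h1, MvPolynomial.aeval_C]
    change _ - v * _ = 0
    rw [hpq, div_mul_cancel₀ _ hq, sub_self]
  have h1 := (injective_iff_map_eq_zero _).mp hW' _ h0
  have hq0 : q ≠ 0 := fun h => hq (by rw [h, map_zero])
  obtain ⟨n, hn⟩ := MvPolynomial.ne_zero_iff.mp hq0
  have h2 := congrArg (MvPolynomial.coeff n) h1
  rw [MvPolynomial.coeff_sub, MvPolynomial.coeff_C_mul, MvPolynomial.coeff_map,
    MvPolynomial.coeff_map, MvPolynomial.coeff_zero, sub_eq_zero] at h2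
  refine ⟨p.coeff n / q.coeff n, ?_⟩
  have h3 := congrArg (algebraMap _ Ω) h2
  rw [map_mul, ← IsScalarTower.algebraMap_apply, ← IsScalarTower.algebraMap_apply] at h3
  rw [map_div₀, h3]
  exact mul_div_cancel_right₀ _ (by simpa using hn)

attribute [local instance] MvPolynomial.algebraMvPolynomial in
/-- If `E` is algebraically closed in `C` and `τ` is algebraically independent over `C`, then
`E(τ)` is algebraically closed in `C(τ)`. -/
lemma mem_adjoin_of_algebraic {E C Ω ι : Type*} [Field E] [Field C] [Field Ω] [Algebra E C]
    [Algebra C Ω] [Algebra E Ω] [IsScalarTower E C Ω]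
    (hEC : ∀ c : C, IsAlgebraic E c → c ∈ Set.range (algebraMap E C))
    (τ : ι → Ω) (hτ : AlgebraicIndependent C τ) (v : Ω)
    (hv : v ∈ IntermediateField.adjoin C (Set.range τ))
    (halg : IsAlgebraic (IntermediateField.adjoin E (Set.range τ)) v) :
    v ∈ IntermediateField.adjoin E (Set.range τ) := by
  let P := MvPolynomial ι E
  let Q := MvPolynomial ι C
  let _ : Algebra Q Ω := (MvPolynomial.aeval τ : Q →ₐ[C] Ω).toAlgebra
  let _ : Algebra P Ω := (MvPolynomial.aeval τ : P →ₐ[E] Ω).toAlgebra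
  have hQ : ∀ q : Q, algebraMap Q Ω q = MvPolynomial.aeval τ q := fun _ => rfl
  have hP : ∀ q : P, algebraMap P Ω q = MvPolynomial.aeval τ q := fun _ => rfl
  have : IsScalarTower P Q Ω := IsScalarTower.of_algebraMap_eq fun p =>
    (MvPolynomial.aeval_map_algebraMap C τ p).symm
  have hQinj : Function.Injective (algebraMap Q Ω) := hτ
  have : FaithfulSMul Q Ω := (faithfulSMul_iff_algebraMap_injective Q Ω).mpr hτ
  let _ := FractionRing.liftAlgebra Q Ω
  have := FractionRing.isScalarTower_liftAlgebra Q Ω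
  have hτE : AlgebraicIndependent E τ := hτ.restrictScalars (algebraMap E C).injective
  have halgP : IsAlgebraic P v := by
    refine IsAlgebraic.of_ringHom_of_comp_eq (R := P) (hτE.aevalEquiv.toAlgHom.toRingHom)
      (RingHom.id Ω) (IntermediateField.isAlgebraic_adjoin_iff.mp halg)
      hτE.aevalEquiv.surjective Function.injective_id ?_
    ext p <;> simp [hP, P]
  obtain ⟨b, hb0, hb⟩ := halgP.exists_integral_multiple
  obtain ⟨p, q, hpq⟩ := (IntermediateField.mem_adjoin_range_iff C τ v).mp hv
  have hbv : b • v = algebraMap (FractionRing Q) Ω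
      (algebraMap Q _ (algebraMap P Q b * p) / algebraMap Q _ q) := by
    rw [map_div₀, ← IsScalarTower.algebraMap_apply, ← IsScalarTower.algebraMap_apply, map_mul,
      ← IsScalarTower.algebraMap_apply, Algebra.smul_def, hpq, hQ, hQ, mul_div_assoc]
  rw [hbv] at hb
  have hb2 := (isIntegral_algebraMap_iff (algebraMap (FractionRing Q) Ω).injective).mp
    (hb.tower_top (A := Q))
  obtain ⟨u, hu⟩ := (IsIntegrallyClosed.isIntegral_iff).mp hb2
  rw [← hu, ← IsScalarTower.algebraMap_apply] at hb hbv
  have hu2 : IsIntegral P u := (isIntegral_algebraMap_iff hQinj).mp hb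
  have hu3 := MvPolynomial.isIntegral_iff_isIntegral_coeff.mp hu2
  have hu4 : ∃ u' : P, algebraMap P Q u' = u := by
    have : u ∈ Set.range (MvPolynomial.map (σ := ι) (algebraMap E C)) := by
      rw [MvPolynomial.mem_range_map_iff_coeffs_subset]
      intro c hc
      obtain ⟨n, _, rfl⟩ := MvPolynomial.mem_coeffs_iff.mp hc
      exact hEC _ (hu3 n).isAlgebraic
    exact this
  obtain ⟨u', rfl⟩ := hu4
  refine (IntermediateField.mem_adjoin_range_iff E τ v).mpr ⟨u', b, ?_⟩
  rw [← IsScalarTower.algebraMap_apply, Algebra.smul_def, hP, hP] at hbv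
  rw [← hbv, mul_div_cancel_left₀]
  exact fun h => hb0 ((injective_iff_map_eq_zero _).mp hτE _ h)

lemma isAlgebraic_mono {E Ω : Type*} [Field E] [Field Ω] [Algebra E Ω]
    {A B : IntermediateField E Ω} (h : A ≤ B) {v : Ω} (hv : IsAlgebraic A v) :
    IsAlgebraic B v := by
  obtain ⟨p, hp, hpv⟩ := hv
  refine ⟨p.map (IntermediateField.inclusion h).toRingHom, ?_, ?_⟩
  · exact (Polynomial.map_ne_zero_iff (IntermediateField.inclusion h).toRingHom.injective).mpr hp
  · rw [Polynomial.aeval_def, Polynomial.eval₂_map]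
    exact hpv

/-- As many elements as those of an algebraically independent family which they generate are
algebraically independent. -/
lemma algebraicIndependent_of_mem_adjoin {E Ω ι : Type*} [Field E] [Field Ω] [Algebra E Ω]
    [Finite ι] {T T' : ι → Ω} (hT : AlgebraicIndependent E T)
    (h : ∀ i, T i ∈ Algebra.adjoin E (Set.range T')) : AlgebraicIndependent E T' := by
  let A := Algebra.adjoin E (Set.range T')
  let t : ι → A := fun i => ⟨T i, h i⟩
  let t' : ι → A := fun i => ⟨T' i, Algebra.subset_adjoin ⟨i, rfl⟩⟩
  have ht : AlgebraicIndependent E t := AlgebraicIndependent.of_comp A.val hT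
  have htop : Algebra.adjoin E (Set.range t') = ⊤ := by
    have h1 : Set.range t' = (Subtype.val : A → Ω) ⁻¹' Set.range T' := by
      ext ⟨a, ha⟩
      simp [t', Subtype.ext_iff]
    rw [h1]
    exact Algebra.adjoin_adjoin_coe_preimage
  have halg : Algebra.IsAlgebraic (Algebra.adjoin E (Set.range t')) A := by
    rw [htop]
    exact ⟨fun a => isAlgebraic_algebraMap (R := (⊤ : Subalgebra E A)) (⟨a, trivial⟩)⟩
  have h2 := (Algebra.IsAlgebraic.isTranscendenceBasis_of_lift_le_trdeg_of_finite E t'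
    ht.lift_cardinalMk_le_trdeg).1
  exact h2.map' (f := A.val) Subtype.val_injective

/-- If `E` is algebraically closed in `C` and `y + c x ∈ C`, then every element of `C(x, y, W)`
algebraic over `E(y + c' x, W)` belongs to the latter field. -/
lemma bertini_aux {E C Ω ι : Type*} [Field E] [Field C] [Field Ω] [CharZero Ω] [Algebra E C]
    [Algebra C Ω] [Algebra E Ω] [IsScalarTower E C Ω]
    (hEC : ∀ w : C, IsAlgebraic E w → w ∈ Set.range (algebraMap E C))
    (x y : Ω) (W : ι → Ω) (c c' : ℕ) (hcc : (c' : Ω) - c ≠ 0)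
    (hz : y + c * x ∈ Set.range (algebraMap C Ω))
    (hτ : AlgebraicIndependent C (fun o : Option ι => o.elim (y + c' * x) W)) (v : Ω)
    (hv : v ∈ (IsScalarTower.toAlgHom E C Ω).fieldRange ⊔
      IntermediateField.adjoin E ({x, y} ∪ Set.range W))
    (halg : IsAlgebraic (IntermediateField.adjoin E
      (Set.range (fun o : Option ι => o.elim (y + c' * x) W))) v) :
    v ∈ IntermediateField.adjoin E (Set.range (fun o : Option ι => o.elim (y + c' * x) W)) := by
  refine mem_adjoin_of_algebraic hEC _ hτ v ?_ halg
  set τ := fun o : Option ι => o.elim (y + c' * x) W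
  set A := IntermediateField.adjoin C (Set.range τ) with hA
  have h2 : ∀ w : C, algebraMap C Ω w ∈ A := fun w => A.algebraMap_mem w
  have hz1 : y + c * x ∈ A := by
    obtain ⟨w, hw⟩ := hz
    rw [← hw]
    exact h2 w
  have hz' : y + c' * x ∈ A := IntermediateField.subset_adjoin C _ (Set.mem_range_self none)
  have h3 : x ∈ A := by
    have h4 : x = ((y + c' * x) - (y + c * x)) / ((c' : Ω) - c) := by
      field_simp
      ring
    rw [h4]
    exact A.div_mem (A.sub_mem hz' hz1) (A.sub_mem (natCast_mem A _) (natCast_mem A _))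
  have h5 : y ∈ A := by
    have h5 : y = (y + c * x) - c * x := by ring
    rw [h5]
    exact A.sub_mem hz1 (A.mul_mem (natCast_mem A c) h3)
  have h1 : (IsScalarTower.toAlgHom E C Ω).fieldRange ⊔
      IntermediateField.adjoin E ({x, y} ∪ Set.range W) ≤ A.restrictScalars E := by
    refine sup_le ?_ ?_
    · rintro w ⟨u, rfl⟩
      exact h2 u
    rw [IntermediateField.adjoin_le_iff]
    rintro w ((rfl | rfl) | ⟨i, rfl⟩)
    · exact h3
    · exact h5
    · exact IntermediateField.subset_adjoin C _ (Set.mem_range_self (some i))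
  exact h1 hv

/-- One step of Bertini's theorem: if `E` is algebraically closed in `F` and there are only
finitely many fields between `E(x, y, W)` and `F`, then `E(y + c x)` is algebraically closed in
`F` for some natural number `c`. -/
lemma bertini_step {E Ω ι : Type*} [Field E] [CharZero E] [Field Ω] [Algebra E Ω] [Finite ι]
    (F : IntermediateField E Ω) (x y : Ω) (W : ι → Ω)
    (hind : AlgebraicIndependent E
      (Sum.elim (fun o : Option ι => o.elim y W) (fun _ : Unit => x)))
    (hx : x ∈ F) (hy : y ∈ F)
    (hW : ∀ i, W i ∈ F)
    (hfin : {G : IntermediateField E Ω |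
      IntermediateField.adjoin E ({x, y} ∪ Set.range W) ≤ G ∧ G ≤ F}.Finite)
    (hcl : ∀ v ∈ F, IsAlgebraic E v → v ∈ Set.range (algebraMap E Ω)) :
    ∃ c : ℕ, ∀ v ∈ F, IsAlgebraic (IntermediateField.adjoin E {y + c * x}) v →
      v ∈ IntermediateField.adjoin E {y + c * x} := by
  have hΩ : CharZero Ω := charZero_of_injective_algebraMap (algebraMap E Ω).injective
  let Z : ℕ → IntermediateField E Ω := fun c => IntermediateField.adjoin E {y + c * x}
  have hzZ : ∀ c : ℕ, y + c * x ∈ Z c := fun c => IntermediateField.mem_adjoin_simple_self E _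
  have hZF : ∀ c, Z c ≤ F := by
    intro c
    rw [IntermediateField.adjoin_le_iff, Set.singleton_subset_iff]
    exact F.add_mem hy (F.mul_mem (natCast_mem F c) hx)
  -- the algebraic closure `C c` of `E(y + c x)` in `F`
  let C : ∀ c, IntermediateField (Z c) Ω := fun c =>
    algebraicClosure (Z c) Ω ⊓ IntermediateField.extendScalars (hZF c)
  have hC : ∀ c v, v ∈ C c ↔ IsAlgebraic (Z c) v ∧ v ∈ F := by
    intro c v
    rw [IntermediateField.mem_inf, mem_algebraicClosure_iff]
    rfl
  let B := IntermediateField.adjoin E ({x, y} ∪ Set.range W)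
  have hBF : B ≤ F := by
    rw [IntermediateField.adjoin_le_iff]
    rintro v ((rfl | rfl) | ⟨i, rfl⟩)
    exacts [hx, hy, hW i]
  have : Finite {G : IntermediateField E Ω | B ≤ G ∧ G ≤ F} := hfin
  obtain ⟨c, c', hcc', hG⟩ := Finite.exists_ne_map_eq_of_infinite
    (fun c => (⟨(C c).restrictScalars E ⊔ B, le_sup_right,
      sup_le (fun v hv => ((hC c v).mp hv).2) hBF⟩ : {G : IntermediateField E Ω | B ≤ G ∧ G ≤ F}))
  have hG' : (C c).restrictScalars E ⊔ B = (C c').restrictScalars E ⊔ B := congrArg Subtype.val hG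
  refine ⟨c', fun v hvF hv => ?_⟩
  let τ : Option ι → Ω := fun o => o.elim (y + c' * x) W
  have hcc : (c' : Ω) - c ≠ 0 := sub_ne_zero.mpr (by exact_mod_cast hcc'.symm)
  -- `y + c x`, `y + c' x` and `W` are independent over `E`
  have hind1 : AlgebraicIndependent E (Sum.elim τ (fun _ : Unit => y + c * x)) := by
    refine algebraicIndependent_of_mem_adjoin hind ?_
    set S := Algebra.adjoin E (Set.range (Sum.elim τ (fun _ : Unit => y + c * x)))
    have h1 : y + c * x ∈ S := Algebra.subset_adjoin ⟨Sum.inr (), rfl⟩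
    have h2 : y + c' * x ∈ S := Algebra.subset_adjoin ⟨Sum.inl none, rfl⟩
    have h3 : x ∈ S := by
      have h4 : x = algebraMap E Ω ((c' : E) - c)⁻¹ * ((y + c' * x) - (y + c * x)) := by
        rw [map_inv₀, map_sub, map_natCast, map_natCast]
        field_simp
        ring
      rw [h4]
      exact S.mul_mem (S.algebraMap_mem _) (S.sub_mem h2 h1)
    rintro ((_ | i) | _)
    · have h5 : y = (y + c * x) - c * x := by ring
      change y ∈ S
      rw [h5]
      exact S.sub_mem h1 (S.mul_mem (natCast_mem S c) h3)
    · exact Algebra.subset_adjoin ⟨Sum.inl (some i), rfl⟩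
    · exact h3
  have hind2 : AlgebraicIndependent E (Sum.elim W (fun _ : Unit => y + c' * x)) := by
    have h1 := hind1.comp (Sum.elim (Sum.inl ∘ some) (fun _ : Unit => Sum.inl none)) (by
      rintro (i | i) (j | j) <;> simp)
    convert! h1 using 1
    ext (i | i) <;> rfl
  have hrange : ∀ a : Ω, Set.range (fun _ : Unit => a) = {a} := fun a => by simp
  have hτ : AlgebraicIndependent (Z c) τ := by
    have := (AlgebraicIndependent.sumElim_iff.mp hind1).2
    rw [hrange] at this
    exact IntermediateField.algebraicIndependent_adjoin_iff.mpr this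
  have hWZ : AlgebraicIndependent (Z c') W := by
    have := (AlgebraicIndependent.sumElim_iff.mp hind2).2
    rw [hrange] at this
    exact IntermediateField.algebraicIndependent_adjoin_iff.mpr this
  have hCalg : Algebra.IsAlgebraic (Z c) (C c) :=
    ⟨fun w => (isAlgebraic_algHom_iff (C c).val Subtype.val_injective).mp ((hC c w).mp w.2).1⟩
  have htower : IsScalarTower E (C c) Ω := IsScalarTower.of_algebraMap_eq fun _ => rfl
  have hτC : AlgebraicIndependent (C c) τ := hτ.extendScalars (C c)
  have hZτ : Z c' ≤ IntermediateField.adjoin E (Set.range τ) := by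
    rw [IntermediateField.adjoin_le_iff, Set.singleton_subset_iff]
    exact IntermediateField.subset_adjoin E _ (Set.mem_range_self none)
  have hv2 : v ∈ IntermediateField.adjoin E (Set.range τ) := by
    refine bertini_aux (C := C c) ?_ x y W c c' hcc ?_ hτC v ?_ (isAlgebraic_mono hZτ hv)
    · intro w hw
      have h1 : IsAlgebraic E (w : Ω) :=
        (isAlgebraic_algHom_iff (IsScalarTower.toAlgHom E (C c) Ω) Subtype.val_injective).mpr hw
      obtain ⟨e, he⟩ := hcl w ((hC c w).mp w.2).2 h1
      refine ⟨e, Subtype.val_injective ?_⟩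
      rw [← he]
      rfl
    · exact ⟨⟨_, (C c).algebraMap_mem ⟨_, hzZ c⟩⟩, rfl⟩
    · have h1 : (IsScalarTower.toAlgHom E (C c) Ω).fieldRange = (C c).restrictScalars E := by
        ext w
        exact ⟨fun ⟨u, hu⟩ => hu ▸ u.2, fun hw => ⟨⟨w, hw⟩, rfl⟩⟩
      have h2 : v ∈ (C c).restrictScalars E ⊔ B := by
        rw [hG']
        exact (le_sup_left : (C c').restrictScalars E ≤ _) ((hC c' v).mpr ⟨hv, hvF⟩)
      rwa [← h1] at h2
  have hv3 : v ∈ IntermediateField.adjoin (Z c') (Set.range W) := by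
    have h1 : IntermediateField.adjoin E (Set.range τ) ≤
        (IntermediateField.adjoin (Z c') (Set.range W)).restrictScalars E := by
      rw [IntermediateField.adjoin_le_iff]
      rintro w ⟨o, rfl⟩
      rcases o with _ | i
      · exact (IntermediateField.adjoin (Z c') (Set.range W)).algebraMap_mem ⟨_, hzZ c'⟩
      · exact IntermediateField.subset_adjoin (Z c') _ (Set.mem_range_self i)
    exact h1 hv2
  obtain ⟨e, he⟩ := mem_of_algebraic_of_mem_adjoin W hWZ v hv3 hv
  rw [← he]
  exact e.2

/-- Bertini's theorem for function fields: if `E` is algebraically closed in `F` and `F` is a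
finite extension of `E(T_0, …, T_m)` (so that there are finitely many intermediate fields), then
there are natural numbers `c_i` such that the field generated over `E` by the `T_{i+1} + c_i T_0`
is algebraically closed in `F`. -/
lemma bertini {Ω : Type} [Field Ω] (m : ℕ) :
    ∀ (E : Type) [Field E] [CharZero E] [Algebra E Ω] (F : IntermediateField E Ω)
      (T : Fin (m + 1) → Ω), AlgebraicIndependent E T → (∀ i, T i ∈ F) →
      {G : IntermediateField E Ω |
        IntermediateField.adjoin E (Set.range T) ≤ G ∧ G ≤ F}.Finite →
      (∀ v ∈ F, IsAlgebraic E v → v ∈ Set.range (algebraMap E Ω)) →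
      ∃ c : Fin m → ℕ, ∀ v ∈ F,
        IsAlgebraic (IntermediateField.adjoin E
          (Set.range fun i : Fin m => T i.succ + c i * T 0)) v →
        v ∈ IntermediateField.adjoin E (Set.range fun i : Fin m => T i.succ + c i * T 0) := by
  induction m with
  | zero =>
    intro E _ _ _ F T hT hTF hfin hcl
    refine ⟨fun _ => 0, fun v hvF hv => ?_⟩
    rw [Set.range_eq_empty, IntermediateField.adjoin_empty] at hv ⊢
    refine IntermediateField.mem_bot.mpr (hcl v hvF ?_)
    have : Algebra.IsAlgebraic E (⊥ : IntermediateField E Ω) := by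
      refine ⟨fun w => ?_⟩
      obtain ⟨e, he⟩ := IntermediateField.mem_bot.mp w.2
      have : w = algebraMap E _ e := Subtype.ext he.symm
      rw [this]
      exact isAlgebraic_algebraMap e
    exact hv.restrictScalars E
  | succ m ih =>
    intro E _ _ _ F T hT hTF hfin hcl
    have hΩ : CharZero Ω := charZero_of_injective_algebraMap (algebraMap E Ω).injective
    let x := T 0
    let y := T (Fin.last (m + 1))
    let W : Fin m → Ω := fun i => T i.succ.castSucc
    have hrangeT : Set.range T = {x, y} ∪ Set.range W := by
      ext w
      constructor
      · rintro ⟨i, rfl⟩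
        refine Fin.lastCases ?_ (fun j => ?_) i
        · exact Or.inl (Or.inr rfl)
        · refine Fin.cases ?_ (fun l => ?_) j
          · exact Or.inl (Or.inl rfl)
          · exact Or.inr ⟨l, rfl⟩
      · rintro ((rfl | rfl) | ⟨i, rfl⟩)
        exacts [⟨_, rfl⟩, ⟨_, rfl⟩, ⟨_, rfl⟩]
    have hind : AlgebraicIndependent E
        (Sum.elim (fun o : Option (Fin m) => o.elim y W) (fun _ : Unit => x)) := by
      have h1 := hT.comp (Sum.elim (fun o : Option (Fin m) =>
        o.elim (Fin.last (m + 1)) (fun i => i.succ.castSucc)) (fun _ : Unit => 0)) (by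
          rintro ((_ | i) | i) ((_ | j) | j) <;> simp [Fin.ext_iff] <;> omega)
      convert! h1 using 1
      ext ((_ | i) | i) <;> rfl
    rw [hrangeT] at hfin
    obtain ⟨c₀, hc₀⟩ := bertini_step F x y W hind (hTF _) (hTF _) (fun i => hTF _) hfin hcl
    set z := y + c₀ * x with hz
    let Z := IntermediateField.adjoin E {z}
    have hzZ : z ∈ Z := IntermediateField.mem_adjoin_simple_self E z
    have hZF : Z ≤ F := by
      rw [IntermediateField.adjoin_le_iff, Set.singleton_subset_iff]
      exact F.add_mem (hTF _) (F.mul_mem (natCast_mem F _) (hTF _))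
    let T' : Fin (m + 1) → Ω := fun i => T i.castSucc
    have hT' : AlgebraicIndependent Z T' := by
      have h1 : AlgebraicIndependent E (Sum.elim T' (fun _ : Unit => z)) := by
        have h2 := hT.comp (Sum.elim Fin.castSucc (fun _ : Unit => Fin.last (m + 1))) (by
          rintro (i | i) (j | j) <;> simp [Fin.ext_iff] <;> omega)
        refine algebraicIndependent_of_mem_adjoin h2 ?_
        set S := Algebra.adjoin E (Set.range (Sum.elim T' (fun _ : Unit => z)))
        have h4 : ∀ i, T' i ∈ S := fun i => Algebra.subset_adjoin ⟨Sum.inl i, rfl⟩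
        have h5 : z ∈ S := Algebra.subset_adjoin ⟨Sum.inr (), rfl⟩
        rintro (i | _)
        · exact h4 i
        · have h6 : y = z - c₀ * T' 0 := by
            change y = y + c₀ * x - c₀ * x
            ring
          change y ∈ S
          rw [h6]
          exact S.sub_mem h5 (S.mul_mem (natCast_mem S _) (h4 0))
      have h2 := (AlgebraicIndependent.sumElim_iff.mp h1).2
      rw [Set.range_const] at h2
      exact IntermediateField.algebraicIndependent_adjoin_iff.mpr h2
    have hfin' : {G : IntermediateField Z Ω | IntermediateField.adjoin Z (Set.range T') ≤ G ∧
        G ≤ IntermediateField.extendScalars hZF}.Finite := by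
      refine Set.Finite.of_injOn (f := IntermediateField.restrictScalars E) ?_
        (IntermediateField.restrictScalars_injective E).injOn hfin
      rintro G ⟨h1, h2⟩
      have h3 : ∀ i, T' i ∈ G := fun i =>
        h1 (IntermediateField.subset_adjoin Z _ (Set.mem_range_self i))
      have h4 : z ∈ G := G.algebraMap_mem ⟨z, hzZ⟩
      refine ⟨?_, fun w hw => h2 hw⟩
      rw [IntermediateField.adjoin_le_iff]
      rintro w ((hw | hw) | ⟨i, rfl⟩)
      · rw [hw]
        exact h3 0
      · have h6 : y = z - c₀ * T' 0 := by
          change y = y + c₀ * x - c₀ * x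
          ring
        change w ∈ G
        rw [hw, h6]
        exact G.sub_mem h4 (G.mul_mem (natCast_mem G _) (h3 0))
      · exact h3 _
    obtain ⟨c', hc'⟩ := ih Z (IntermediateField.extendScalars hZF) T' hT' (fun i => hTF _) hfin'
      (fun v hvF hv => ⟨⟨v, hc₀ v hvF hv⟩, rfl⟩)
    refine ⟨Fin.snoc c' c₀, ?_⟩
    have hrange : (Set.range fun i : Fin (m + 1) =>
        T i.succ + ((Fin.snoc c' c₀ : Fin (m + 1) → ℕ) i : Ω) * T 0) =
        {z} ∪ Set.range fun i : Fin m => T' i.succ + c' i * T' 0 := by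
      ext w
      constructor
      · rintro ⟨i, rfl⟩
        refine Fin.lastCases ?_ (fun j => ?_) i
        · left
          simp [hz, y, x]
        · right
          exact ⟨j, by simp [T']⟩
      · rintro (rfl | ⟨i, rfl⟩)
        · exact ⟨Fin.last m, by simp [hz, y, x]⟩
        · exact ⟨i.castSucc, by simp [T']⟩
    intro v hvF
    rw [hrange, ← IntermediateField.adjoin_adjoin_left]
    exact hc' v hvF

/-! ### Derivatives of algebraic elements -/

/-- The constants of a derivation which vanishes on `E`, as an extension of `E`. -/
def constField {E Ω : Type*} [Field E] [Field Ω] [Algebra E Ω] (δ : AbsDer Ω)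
    (hE : ∀ e : E, δ (algebraMap E Ω e) = 0) : IntermediateField E Ω where
  carrier := {w | δ w = 0}
  mul_mem' {a b} ha hb := by
    change δ (a * b) = 0
    rw [AbsDer.map_mul, show δ a = 0 from ha, show δ b = 0 from hb, mul_zero, mul_zero, add_zero]
  add_mem' {a b} ha hb := by
    change δ (a + b) = 0
    rw [map_add, show δ a = 0 from ha, show δ b = 0 from hb, add_zero]
  algebraMap_mem' := hE
  inv_mem' a ha := by
    change δ a⁻¹ = 0
    by_cases h0 : a = 0
    · rw [h0, inv_zero, map_zero]
    have h1 : δ (a * a⁻¹) = 0 := by rw [mul_inv_cancel₀ h0]; simp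
    rw [AbsDer.map_mul, show δ a = 0 from ha, mul_zero, add_zero] at h1
    exact (mul_eq_zero.mp h1).resolve_left h0

/-- In characteristic zero, the derivative of an algebraic element is determined by
differentiating its minimal polynomial. -/
lemma der_algebraic {A Ω : Type*} [Field A] [CharZero A] [Field Ω] [Algebra A Ω] (δ : AbsDer Ω)
    (w : Ω) (hw : IsAlgebraic A w) :
    ∃ p : Polynomial A, Polynomial.aeval w p.derivative ≠ 0 ∧
      δ w * Polynomial.aeval w p.derivative =
        - ∑ i ∈ Finset.range (p.natDegree + 1), δ (algebraMap A Ω (p.coeff i)) * w ^ i := by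
  refine ⟨minpoly A w, ?_, ?_⟩
  · exact (minpoly.irreducible hw.isIntegral).separable.aeval_derivative_ne_zero (minpoly.aeval A w)
  · have h := AbsDer.eval δ ((minpoly A w).map (algebraMap A Ω)) w
    rw [Polynomial.natDegree_map, Polynomial.derivative_map, Polynomial.eval_map_algebraMap,
      Polynomial.eval_map_algebraMap, minpoly.aeval, map_zero] at h
    simp only [Polynomial.coeff_map] at h
    rw [eq_neg_iff_add_eq_zero, mul_comm, ← h]

lemma der_eq_zero_of_algebraic {A Ω : Type*} [Field A] [CharZero A] [Field Ω] [Algebra A Ω]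
    (δ : AbsDer Ω) (hA : ∀ e : A, δ (algebraMap A Ω e) = 0) (w : Ω) (hw : IsAlgebraic A w) :
    δ w = 0 := by
  obtain ⟨p, hp, h⟩ := der_algebraic δ w hw
  simp only [hA, zero_mul, Finset.sum_const_zero, neg_zero] at h
  exact (mul_eq_zero.mp h).resolve_right hp

lemma der_mem_of_algebraic {E Ω : Type*} [Field E] [CharZero E] [Field Ω] [Algebra E Ω]
    (δ : AbsDer Ω) (A F : IntermediateField E Ω) (hAF : A ≤ F) (hA : ∀ w ∈ A, δ w ∈ A)
    (w : Ω) (hwF : w ∈ F) (hw : IsAlgebraic A w) : δ w ∈ F := by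
  have : CharZero A := charZero_of_injective_algebraMap (algebraMap E A).injective
  obtain ⟨p, hp, h⟩ := der_algebraic δ w hw
  rw [eq_div_of_mul_eq hp h]
  refine F.div_mem (F.neg_mem (F.sum_mem fun i _ => F.mul_mem (hAF (hA _ (p.coeff i).2))
    (pow_mem hwF i))) ?_
  rw [Polynomial.aeval_eq_sum_range]
  exact F.sum_mem fun i _ => F.mul_mem (hAF (Subtype.prop _)) (pow_mem hwF i)

/-- Two-variable relations: if `w` is algebraic over `E[u]` then `P(u, w) = 0` for some non-zero
`P ∈ E[U][W]`. -/
lemma exists_relation {E Ω : Type*} [Field E] [Field Ω] [Algebra E Ω] (u w : Ω)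
    (h : IsAlgebraic (Algebra.adjoin E {u}) w) :
    ∃ P : Polynomial (Polynomial E), P ≠ 0 ∧
      P.eval₂ (Polynomial.aeval u : Polynomial E →ₐ[E] Ω).toRingHom w = 0 := by
  let : Algebra (Polynomial E) Ω := (Polynomial.aeval u : Polynomial E →ₐ[E] Ω).toRingHom.toAlgebra
  let f : Polynomial E →ₐ[E] Algebra.adjoin E {u} :=
    (Polynomial.aeval (⟨u, Algebra.self_mem_adjoin_singleton E u⟩ : Algebra.adjoin E {u}))
  have hfu : ∀ p, ((f p : Algebra.adjoin E {u}) : Ω) = Polynomial.aeval u p := by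
    intro p
    exact (Polynomial.aeval_algHom_apply (Algebra.adjoin E {u}).val _ p).symm
  have hf : Function.Surjective f := by
    rintro ⟨a, ha⟩
    rw [Algebra.adjoin_singleton_eq_range_aeval] at ha
    obtain ⟨p, hp⟩ := ha
    exact ⟨p, Subtype.ext ((hfu p).trans hp)⟩
  have := IsAlgebraic.of_ringHom_of_comp_eq (R := Polynomial E) (A := Ω) f (RingHom.id Ω)
    (a := w) h hf Function.injective_id (by ext p <;> exact hfu _)
  exact this

/-- If `F` is algebraic over `E(x)`, then it is algebraic over `E(u)` for every `u ∈ F`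
transcendental over `E`. -/
lemma isAlgebraic_exchange {E Ω : Type*} [Field E] [Field Ω] [Algebra E Ω]
    (F : IntermediateField E Ω) (x : Ω)
    (halg : ∀ v ∈ F, IsAlgebraic (IntermediateField.adjoin E {x}) v) (u : Ω) (hu : u ∈ F)
    (hut : Transcendental E u) (v : Ω) (hv : v ∈ F) :
    IsAlgebraic (Algebra.adjoin E {u}) v := by
  have hxu : IsAlgebraic (Algebra.adjoin E {u}) x := by
    by_contra hxu
    have h1 : AlgebraicIndependent E (Sum.elim (fun _ : Unit => x) (fun _ : Unit => u)) := by
      rw [AlgebraicIndependent.sumElim_iff, Set.range_const,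
        algebraicIndependent_unique_type_iff, algebraicIndependent_unique_type_iff]
      exact ⟨hut, hxu⟩
    have h2 : AlgebraicIndependent E (Sum.elim (fun _ : Unit => u) (fun _ : Unit => x)) := by
      have h3 := h1.comp Sum.swap Sum.swap_leftInverse.injective
      convert! h3 using 1
      ext (i | i) <;> rfl
    rw [AlgebraicIndependent.sumElim_iff, Set.range_const,
      algebraicIndependent_unique_type_iff, algebraicIndependent_unique_type_iff] at h2
    exact h2.2 (IntermediateField.isAlgebraic_adjoin_iff.mp (halg u hu))
  rw [← IntermediateField.isAlgebraic_adjoin_iff] at hxu ⊢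
  let U := IntermediateField.adjoin E {u}
  have h1 : IntermediateField.adjoin E {x} ≤ (algebraicClosure U Ω).restrictScalars E := by
    rw [IntermediateField.adjoin_le_iff, Set.singleton_subset_iff]
    exact mem_algebraicClosure_iff.mpr hxu
  have h2 : IsAlgebraic (algebraicClosure U Ω) v := isAlgebraic_mono h1 (halg v hv)
  exact h2.restrictScalars U

/-- A finitely supported non-zero family of Laurent series becomes, after multiplication by a power
of `t`, a family of power series whose residues are not all zero. -/
lemma exists_scaling {L σ : Type*} [Field L] (s : Finset σ) (c : σ → LaurentSeries L)
    (hs : ∀ i, i ∉ s → c i = 0) (hne : ∃ i, c i ≠ 0) :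
    ∃ (n : ℤ) (v : σ → PowerSeries L),
      (∀ i, HahnSeries.ofPowerSeries ℤ L (v i) = HahnSeries.single n 1 * c i) ∧
      ∃ i, PowerSeries.constantCoeff (v i) ≠ 0 := by
  classical
  obtain ⟨j, hj⟩ := hne
  obtain ⟨i, hi, hmin⟩ := (s.filter fun i => c i ≠ 0).exists_min_image (fun i => (c i).order)
    ⟨j, Finset.mem_filter.mpr ⟨by_contra fun h => hj (hs j h), hj⟩⟩
  refine ⟨-(c i).order, fun j => PowerSeries.mk fun m => (c j).coeff (m + (c i).order), ?_, i, ?_⟩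
  · intro j
    ext m
    have h1 := HahnSeries.coeff_single_mul_add (r := (1 : L)) (x := c j)
      (a := m + (c i).order) (b := -(c i).order)
    rw [add_neg_cancel_right, one_mul] at h1
    rw [h1, PowerSeries.coeff_coe]
    split_ifs with hm
    · symm
      by_contra hne
      have hj : c j ≠ 0 := fun h => hne (by rw [h]; rfl)
      have := hmin j (Finset.mem_filter.mpr ⟨by_contra fun h => hj (hs j h), hj⟩)
      exact hne (HahnSeries.coeff_eq_zero_of_lt_order (by omega))
    · rw [PowerSeries.coeff_mk, Int.natAbs_of_nonneg (not_lt.mp hm)]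
  · rw [← PowerSeries.coeff_zero_eq_constantCoeff_apply, PowerSeries.coeff_mk]
    simpa using HahnSeries.coeff_order_eq_zero.not.mpr (Finset.mem_filter.mp hi).2

/-! ### Degrees in `t` and relations between residues -/

/-- `DegLE e w` says that the power series `w` is a polynomial of degree at most `e`. -/
def DegLE {L : Type*} [Field L] (e : ℕ) (w : PowerSeries L) : Prop :=
  ∀ n, e < n → PowerSeries.coeff n w = 0

lemma DegLE.mul {L : Type*} [Field L] {a b : ℕ} {v w : PowerSeries L} (hv : DegLE a v)
    (hw : DegLE b w) : DegLE (a + b) (v * w) := by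
  intro n hn
  rw [PowerSeries.coeff_mul]
  refine Finset.sum_eq_zero fun p hp => ?_
  rw [Finset.HasAntidiagonal.mem_antidiagonal] at hp
  by_cases h : a < p.1
  · rw [hv _ h, zero_mul]
  · rw [hw _ (by omega), mul_zero]

lemma DegLE.one {L : Type*} [Field L] : DegLE 0 (1 : PowerSeries L) := by
  intro n hn
  rw [PowerSeries.coeff_one, if_neg (by omega)]

lemma DegLE.pow {L : Type*} [Field L] {a : ℕ} {v : PowerSeries L} (hv : DegLE a v) (n : ℕ) :
    DegLE (a * n) (v ^ n) := by
  induction n with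
  | zero => simpa using DegLE.one
  | succ n ih => rw [pow_succ, mul_add, mul_one]; exact ih.mul hv

lemma DegLE.prod {L ι : Type*} [Field L] (s : Finset ι) (e : ι → ℕ) (f : ι → PowerSeries L)
    (h : ∀ i, DegLE (e i) (f i)) : DegLE (∑ i ∈ s, e i) (∏ i ∈ s, f i) := by
  classical
  induction s using Finset.induction_on with
  | empty => simpa using DegLE.one
  | insert i s hi ih => rw [Finset.sum_insert hi, Finset.prod_insert hi]; exact (h i).mul ih

lemma DegLE.det {L : Type*} [Field L] {μ : ℕ} (e : Fin μ → ℕ)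
    (N : Matrix (Fin μ) (Fin μ) (PowerSeries L)) (h : ∀ i j, DegLE (e j) (N i j)) :
    DegLE (∑ j, e j) N.det := by
  intro n hn
  rw [Matrix.det_apply, map_sum]
  refine Finset.sum_eq_zero fun σ _ => ?_
  have := DegLE.prod Finset.univ e (fun j => N (σ j) j) (fun j => h _ _) n hn
  rw [Units.smul_def, map_zsmul, this, smul_zero]

lemma DegLE.psDer_iterate {κ L : Type*} [Field κ] [Field L] [Algebra κ L] (D : Derivation κ L L)
    {e : ℕ} {w : PowerSeries L} (h : DegLE e w) (i : ℕ) : DegLE e ((psDer D)^[i] w) := by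
  induction i with
  | zero => exact h
  | succ i ih =>
    intro n hn
    rw [Function.iterate_succ_apply', psDer_coeff, ih n hn, map_zero]

/-- Let `u ∈ F` be a power series whose residue satisfies no non-trivial relation with coefficients
residues of power series in `E`. If `w` is algebraic over `E[u]`, then the residue of `w` is a root
of a non-zero polynomial whose coefficients are residues of power series in `F` of a special kind:
every derivation killing the power series of `E` takes on them values divisible by `δ u`. -/
lemma exists_residue_relation {L E : Type*} [Field L] [Field E]
    [Algebra E (LaurentSeries L)] (F : IntermediateField E (LaurentSeries L))
    (ht : ∀ n : ℤ, HahnSeries.single n (1 : L) ∈ Set.range (algebraMap E (LaurentSeries L)))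
    (u w : PowerSeries L) (huF : HahnSeries.ofPowerSeries ℤ L u ∈ F)
    (huw : IsAlgebraic (Algebra.adjoin E {HahnSeries.ofPowerSeries ℤ L u})
      (HahnSeries.ofPowerSeries ℤ L w))
    (hres : ∀ p : Polynomial (PowerSeries L),
      (∀ i, HahnSeries.ofPowerSeries ℤ L (p.coeff i) ∈
        Set.range (algebraMap E (LaurentSeries L))) →
      (p.map PowerSeries.constantCoeff).eval (PowerSeries.constantCoeff u) = 0 →
      p.map PowerSeries.constantCoeff = 0) :
    ∃ q : Polynomial (PowerSeries L),
      (∀ i, HahnSeries.ofPowerSeries ℤ L (q.coeff i) ∈ F ∧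
        ∀ δ : AbsDer (PowerSeries L),
          (∀ e, HahnSeries.ofPowerSeries ℤ L e ∈ Set.range (algebraMap E (LaurentSeries L)) →
            δ e = 0) → δ u ∣ δ (q.coeff i)) ∧
      q.map PowerSeries.constantCoeff ≠ 0 ∧
      (q.map PowerSeries.constantCoeff).eval (PowerSeries.constantCoeff w) = 0 := by
  set ι := HahnSeries.ofPowerSeries ℤ L with hι
  obtain ⟨P, hP, hPw⟩ := exists_relation _ _ huw
  set B := P.natDegree + 1 with hB
  set A := ∑ j ∈ Finset.range B, ((P.coeff j).natDegree + 1) with hA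
  have hPA : ∀ j, j < B → (P.coeff j).natDegree < A := by
    intro j hj
    have := Finset.single_le_sum (f := fun j => (P.coeff j).natDegree + 1)
      (fun _ _ => Nat.zero_le _) (Finset.mem_range.mpr hj)
    rw [hA]
    exact this
  obtain ⟨n, v, hv, ⟨⟨i₀, j₀⟩, hv0⟩⟩ := exists_scaling (L := L)
    (Finset.range A ×ˢ Finset.range B)
    (fun p : ℕ × ℕ => algebraMap E (LaurentSeries L) ((P.coeff p.2).coeff p.1)) (by
      rintro ⟨i, j⟩ hij
      rw [Finset.mem_product, Finset.mem_range, Finset.mem_range, not_and_or] at hij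
      by_cases hj : j < B
      · rw [Polynomial.coeff_eq_zero_of_natDegree_lt, map_zero]
        have := hPA j hj
        simp only at hij ⊢
        omega
      · rw [Polynomial.coeff_eq_zero_of_natDegree_lt (p := P) (by simp only; omega)]
        simp) (by
      by_contra! h
      apply hP
      ext j i
      exact (map_eq_zero _).mp (h (i, j)))
  have hvE : ∀ p, ι (v p) ∈ Set.range (algebraMap E (LaurentSeries L)) := by
    intro p
    obtain ⟨τ, hτ⟩ := ht n
    exact ⟨τ * (P.coeff p.2).coeff p.1, by rw [map_mul, hτ, hv p]⟩
  have hEF : ∀ z, z ∈ Set.range (algebraMap E (LaurentSeries L)) → z ∈ F := by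
    rintro _ ⟨e, rfl⟩
    exact F.algebraMap_mem e
  have hvanish : ∀ i j, ¬ (i < A ∧ j < B) → v (i, j) = 0 := by
    intro i j hij
    apply HahnSeries.ofPowerSeries_injective (Γ := ℤ)
    rw [map_zero, ← hι, hv]
    by_cases hj : j < B
    · have := hPA j hj
      rw [Polynomial.coeff_eq_zero_of_natDegree_lt (by simp only; omega), map_zero, mul_zero]
    · rw [Polynomial.coeff_eq_zero_of_natDegree_lt (p := P) (by simp only; omega)]
      simp
  let b : ℕ → PowerSeries L := fun j => ∑ i ∈ Finset.range A, v (i, j) * u ^ i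
  let q : Polynomial (PowerSeries L) := ∑ j ∈ Finset.range B, Polynomial.C (b j) * Polynomial.X ^ j
  have hq : ∀ j, q.coeff j = b j := by
    intro j
    rw [Polynomial.finsetSum_coeff]
    simp only [Polynomial.coeff_C_mul_X_pow]
    rw [Finset.sum_ite_eq (Finset.range B) j]
    split_ifs with hj
    · rfl
    · rw [Finset.mem_range] at hj
      exact (Finset.sum_eq_zero fun i _ => by rw [hvanish i j (by tauto), zero_mul]).symm
  refine ⟨q, fun j => ⟨?_, ?_⟩, ?_, ?_⟩
  · rw [hq, map_sum]
    refine F.sum_mem fun i _ => ?_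
    rw [map_mul, map_pow]
    exact F.mul_mem (hEF _ (hvE _)) (pow_mem huF i)
  · intro δ hδ
    rw [hq, map_sum]
    refine Finset.dvd_sum fun i _ => ?_
    rw [AbsDer.map_mul, AbsDer.map_pow, hδ _ (hvE _), mul_zero, add_zero]
    exact Dvd.intro_left (v (i, j) * (i * u ^ (i - 1))) (by ring)
  · intro h0
    let p : Polynomial (PowerSeries L) :=
      ∑ i ∈ Finset.range A, Polynomial.C (v (i, j₀)) * Polynomial.X ^ i
    have hp : ∀ i, p.coeff i = v (i, j₀) := by
      intro i
      rw [Polynomial.finsetSum_coeff]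
      simp only [Polynomial.coeff_C_mul_X_pow]
      rw [Finset.sum_ite_eq (Finset.range A) i]
      split_ifs with hi
      · rfl
      · rw [Finset.mem_range] at hi
        rw [hvanish i j₀ (by tauto)]
    have h1 : p.map PowerSeries.constantCoeff = 0 := by
      refine hres p (fun i => by rw [hp]; exact hvE _) ?_
      have h2 : (p.map PowerSeries.constantCoeff).eval (PowerSeries.constantCoeff u) =
          PowerSeries.constantCoeff (b j₀) := by
        rw [Polynomial.eval_map, Polynomial.eval₂_hom, Polynomial.eval_finsetSum]
        simp [b]
      rw [h2, ← hq, ← Polynomial.coeff_map, h0, Polynomial.coeff_zero]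
    apply hv0
    rw [← hp, ← Polynomial.coeff_map, h1, Polynomial.coeff_zero]
  · have h1 : q.eval w = 0 := by
      apply HahnSeries.ofPowerSeries_injective (Γ := ℤ)
      rw [map_zero, ← hι, Polynomial.eval_finsetSum, map_sum]
      rw [Polynomial.eval₂_eq_sum_range] at hPw
      rw [← mul_zero (HahnSeries.single n (1 : L)), ← hPw, Finset.mul_sum]
      refine Finset.sum_congr rfl fun j hj => ?_
      rw [Polynomial.eval_C_mul, Polynomial.eval_pow, Polynomial.eval_X, map_mul, map_pow,
        ← mul_assoc]
      congr 1
      change _ = _ * Polynomial.aeval (ι u) (P.coeff j)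
      rw [Polynomial.aeval_eq_sum_range' (hPA j (Finset.mem_range.mp hj)), map_sum, Finset.mul_sum]
      refine Finset.sum_congr rfl fun i _ => ?_
      rw [map_mul, map_pow, hv, Algebra.smul_def, mul_assoc]
    rw [Polynomial.eval_map, Polynomial.eval₂_hom, h1, map_zero]

/-! ### The determinant method -/

/-- Power series representing elements of `F`. -/
noncomputable def psSubring {L E : Type*} [Field L] [Field E] [Algebra E (LaurentSeries L)]
    (F : IntermediateField E (LaurentSeries L)) : Subring (PowerSeries L) :=
  F.toSubalgebra.toSubring.comap (HahnSeries.ofPowerSeries ℤ L)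

lemma mem_psSubring {L E : Type*} [Field L] [Field E] [Algebra E (LaurentSeries L)]
    (F : IntermediateField E (LaurentSeries L)) (w : PowerSeries L) :
    w ∈ psSubring F ↔ HahnSeries.ofPowerSeries ℤ L w ∈ F := Iff.rfl

lemma psSubring_saturated {L E : Type*} [Field L] [Field E] [Algebra E (LaurentSeries L)]
    (F : IntermediateField E (LaurentSeries L))
    (ht : ∀ n : ℤ, HahnSeries.single n (1 : L) ∈ Set.range (algebraMap E (LaurentSeries L)))
    (w : PowerSeries L) (hw : PowerSeries.X * w ∈ psSubring F) : w ∈ psSubring F := by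
  rw [mem_psSubring, map_mul, HahnSeries.ofPowerSeries_X] at hw
  obtain ⟨e, he⟩ := ht (-1)
  have h := F.mul_mem (F.algebraMap_mem e) hw
  rw [he, ← mul_assoc, HahnSeries.single_mul_single] at h
  rw [mem_psSubring]
  simpa using h

lemma sum_weights (M d : ℕ) :
    2 * ∑ p : Fin M × Fin d, ((p.1 : ℕ) + p.2) + 2 * (M * d) = M * d * (M + d) := by
  rw [Fintype.sum_prod_type]
  simp only [Finset.sum_add_distrib, Finset.sum_const, Finset.card_univ, Fintype.card_fin,
    smul_eq_mul]
  rw [← Finset.mul_sum, Fin.sum_univ_eq_sum_range (fun i => i) M,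
    Fin.sum_univ_eq_sum_range (fun i => i) d]
  have h1 := Finset.sum_range_id_mul_two M
  have h2 := Finset.sum_range_id_mul_two d
  obtain _ | M := M
  · simp
  obtain _ | d := d
  · simp
  simp only [Nat.add_sub_cancel] at h1 h2
  nlinarith

lemma ofPowerSeries_of_coeff {L : Type*} [Field L] (x : LaurentSeries L)
    (hx : ∀ n : ℤ, n < 0 → x.coeff n = 0) :
    ∃ w : PowerSeries L, HahnSeries.ofPowerSeries ℤ L w = x ∧
      ∀ n : ℕ, PowerSeries.coeff n w = x.coeff n := by
  refine ⟨PowerSeries.mk fun n => x.coeff n, ?_, fun n => by simp⟩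
  ext m
  rw [PowerSeries.coeff_coe]
  split_ifs with hm
  · exact (hx m hm).symm
  · rw [PowerSeries.coeff_mk, Int.natAbs_of_nonneg (not_lt.mp hm)]

/-- The Wronskian determinant of the monomials `x ^ a * y ^ b`, where `x` and `y` are polynomials in
`t` of degree at most `s`, is a polynomial in `t` of degree at most `s * ∑ (a + b)`. -/
lemma wronskian_degree {κ L : Type*} [Field κ] [Field L] [Algebra κ L]
    (D : Derivation κ L L) (x y : PowerSeries L) (s : ℕ) (hx : DegLE s x) (hy : DegLE s y)
    (M d : ℕ) :
    DegLE (s * ∑ p : Fin M × Fin d, ((p.1 : ℕ) + p.2)) (Matrix.of fun i j : Fin (M * d) =>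
      (psDer D)^[(i : ℕ)] (x ^ ((finProdFinEquiv.symm j).1 : ℕ) *
        y ^ ((finProdFinEquiv.symm j).2 : ℕ))).det := by
  rw [Finset.mul_sum, ← finProdFinEquiv.symm.sum_comp]
  refine DegLE.det _ _ fun i j => ?_
  refine DegLE.psDer_iterate D ?_ i
  rw [mul_add]
  exact (hx.pow _).mul (hy.pow _)

lemma coeffDer_iterate {κ L : Type*} [Field κ] [Field L] [Algebra κ L]
    (D : Derivation κ L L) (w : PowerSeries L) (i : ℕ) :
    (coeffDer D)^[i] (HahnSeries.ofPowerSeries ℤ L w) =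
      HahnSeries.ofPowerSeries ℤ L ((psDer D)^[i] w) := by
  induction i with
  | zero => rfl
  | succ i ih =>
    rw [Function.iterate_succ_apply', Function.iterate_succ_apply', ih, coeffDer_ofPowerSeries]

/-- The degree of the Wronskian is eventually smaller than its order of vanishing: the leading terms
in `M` are `(r - 1) * d * M ^ 2 / 2` and `α * d ^ 2 * M ^ 2 / 2`. -/
lemma core_numeric (α d r : ℕ) (hd : 1 ≤ d) (hr : r ≤ α * d) (hr0 : 0 < r)
    (h : ∀ M : ℕ, 1 ≤ M → α * ∑ i : Fin (M * d), (i : ℕ) ≤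
      (r - 1) * ∑ p : Fin M × Fin d, ((p.1 : ℕ) + p.2)) : False := by
  obtain ⟨s, rfl⟩ : ∃ s, r = s + 1 := ⟨r - 1, by omega⟩
  rw [Nat.add_sub_cancel] at h
  set M := α + s * d + 1 with hM
  have h1 := h M (by omega)
  have h2 := sum_weights M d
  rw [Fin.sum_univ_eq_sum_range (fun i => i)] at h1
  have h3 := Finset.sum_range_id_mul_two (M * d)
  set S := ∑ i ∈ Finset.range (M * d), i
  set W := ∑ p : Fin M × Fin d, ((p.1 : ℕ) + p.2)
  have hMd : 0 < M * d := Nat.mul_pos (by omega) hd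
  obtain ⟨μ, hμ⟩ : ∃ μ, M * d = μ + 1 := ⟨M * d - 1, by omega⟩
  rw [hμ] at h2 h3
  simp only [Nat.add_sub_cancel] at h3
  -- `α (M d - 1) + 2 s ≤ s (M + d)`
  have h4 : (μ + 1) * (α * μ + 2 * s) ≤ (μ + 1) * (s * (M + d)) := by nlinarith
  have h5 : α * μ + 2 * s ≤ s * (M + d) := le_of_mul_le_mul_left h4 (by omega)
  have h6 : α * (M * d) = α * μ + α := by rw [hμ]; ring
  have h7 : (s + 1) * M ≤ α * (M * d) := by
    calc (s + 1) * M ≤ α * d * M := Nat.mul_le_mul_right _ hr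
      _ = α * (M * d) := by ring
  nlinarith

/-- There is a power series in `F` whose residue satisfies no non-trivial relation with coefficients
residues of power series in `E`, provided that some derivation acting on coefficients kills `E` but
not `F`: otherwise `trap` makes the derivation divisible by all powers of `t`. -/
lemma exists_residually_transcendental {κ L E : Type*} [Field κ] [Field L] [CharZero L]
    [Algebra κ L] [Field E] [Algebra E (LaurentSeries L)]
    (F : IntermediateField E (LaurentSeries L))
    (ht : ∀ n : ℤ, HahnSeries.single n (1 : L) ∈ Set.range (algebraMap E (LaurentSeries L)))
    (D : Derivation κ L L) (hDE : ∀ e, coeffDer D (algebraMap E (LaurentSeries L) e) = 0)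
    (x : PowerSeries L) (hx : x ∈ psSubring F) (hDx : psDer D x ≠ 0) :
    ∃ u ∈ psSubring F, ∀ p : Polynomial (PowerSeries L),
      (∀ i, HahnSeries.ofPowerSeries ℤ L (p.coeff i) ∈
        Set.range (algebraMap E (LaurentSeries L))) →
      (p.map PowerSeries.constantCoeff).eval (PowerSeries.constantCoeff u) = 0 →
      p.map PowerSeries.constantCoeff = 0 := by
  by_contra! hcon
  apply hDx
  ext n
  rw [map_zero]
  refine PowerSeries.X_pow_dvd_iff.mp (trap (psDer D) (psDer_X D) (psSubring F)
    (psSubring_saturated F ht) (n + 1) ?_ x hx) n (Nat.lt_succ_self n)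
  intro w hw
  obtain ⟨p, hp1, hp2, hp3⟩ := hcon w hw
  refine ⟨p, fun i => ?_, hp3, hp2⟩
  obtain ⟨e, he⟩ := hp1 i
  constructor
  · rw [mem_psSubring, ← he]
    exact F.algebraMap_mem e
  · have h0 : psDer D (p.coeff i) = 0 := by
      apply HahnSeries.ofPowerSeries_injective (Γ := ℤ)
      rw [← coeffDer_ofPowerSeries, ← he, hDE, map_zero]
    rw [h0]
    exact dvd_zero _

/-- The determinant method. Let `E` be algebraically closed in `F`, an algebraic extension of `E(x)`,
where `x` and `y` are polynomials in `t` of degree `< r ≤ α * d`, and suppose that the monomials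
`x ^ a * y ^ b` with `b < d` are independent over `E`. Then it is impossible that any `α` elements of
`L` are killed by a derivation of `L` which, acting on coefficients, kills `E` but not `x`: the
Wronskian of the monomials would be a non-zero polynomial in `t` of small degree, divisible by a
large power of `t`. -/
lemma core {κ L E : Type*} [Field κ] [Field L] [CharZero L]
    [Algebra κ L] [Field E] [Algebra E (LaurentSeries L)]
    (F : IntermediateField E (LaurentSeries L))
    (ht : ∀ n : ℤ, HahnSeries.single n (1 : L) ∈ Set.range (algebraMap E (LaurentSeries L)))
    (hcl : ∀ v ∈ F, IsAlgebraic E v → v ∈ Set.range (algebraMap E (LaurentSeries L)))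
    (x y : LaurentSeries L) (hxF : x ∈ F) (hyF : y ∈ F)
    (halg : ∀ v ∈ F, IsAlgebraic (IntermediateField.adjoin E {x}) v)
    (d r α : ℕ) (hd : 1 ≤ d) (hr0 : 0 < r) (hr : r ≤ α * d)
    (hindep : ∀ M : ℕ, LinearIndependent E
      (fun p : Fin M × Fin d => x ^ (p.1 : ℕ) * y ^ (p.2 : ℕ)))
    (hxr : ∀ n : ℤ, (n < 0 ∨ r ≤ n) → x.coeff n = 0)
    (hyr : ∀ n : ℤ, (n < 0 ∨ r ≤ n) → y.coeff n = 0)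
    (hder : ∀ S : Finset L, S.card ≤ α → ∃ D : Derivation κ L L, (∀ s ∈ S, D s = 0) ∧
      (∀ e, coeffDer D (algebraMap E (LaurentSeries L) e) = 0) ∧ coeffDer D x ≠ 0) : False := by
  classical
  have hL0 : CharZero (LaurentSeries L) :=
    charZero_of_injective_ringHom (HahnSeries.C_injective (Γ := ℤ) (R := L))
  have hE0 : CharZero E := (algebraMap E (LaurentSeries L)).charZero
  have hιinj := HahnSeries.ofPowerSeries_injective (Γ := ℤ) (R := L)
  set ι := HahnSeries.ofPowerSeries ℤ L with hι
  obtain ⟨xp, hxp, hxpc⟩ := ofPowerSeries_of_coeff x fun n hn => hxr n (Or.inl hn)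
  obtain ⟨yp, hyp, hypc⟩ := ofPowerSeries_of_coeff y fun n hn => hyr n (Or.inl hn)
  have hxdeg : DegLE (r - 1) xp := fun n hn => by rw [hxpc]; exact hxr n (Or.inr (by omega))
  have hydeg : DegLE (r - 1) yp := fun n hn => by rw [hypc]; exact hyr n (Or.inr (by omega))
  have hxV : xp ∈ psSubring F := by rw [mem_psSubring, ← hι, hxp]; exact hxF
  obtain ⟨u, huF, hures⟩ : ∃ u ∈ psSubring F, _ := by
    obtain ⟨D, -, hDE, hDx⟩ := hder ∅ (by simp)
    refine exists_residually_transcendental F ht D hDE xp hxV fun h => hDx ?_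
    rw [← hxp, coeffDer_ofPowerSeries, h, map_zero]
  rw [mem_psSubring] at huF
  have hutr : Transcendental E (ι u) := by
    intro h
    obtain ⟨e, he⟩ := hcl _ huF h
    have h1 := hures (Polynomial.X - Polynomial.C u) (fun i => by
      rw [Polynomial.coeff_sub, Polynomial.coeff_X, Polynomial.coeff_C, map_sub]
      refine ⟨(if 1 = i then 1 else 0) - (if i = 0 then e else 0), ?_⟩
      rw [map_sub]
      congr 1
      · split_ifs <;> simp
      · split_ifs
        · exact he
        · simp) (by simp)
    rw [Polynomial.map_sub, Polynomial.map_X, Polynomial.map_C] at h1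
    exact Polynomial.X_sub_C_ne_zero _ h1
  have hualg : ∀ v ∈ F, IsAlgebraic (IntermediateField.adjoin E {ι u}) v := fun v hv =>
    IntermediateField.isAlgebraic_adjoin_iff.mpr (isAlgebraic_exchange F x halg _ huF hutr v hv)
  -- a derivation killing the first `α` coefficients of `u`
  obtain ⟨D, hDS, hDE, hDx⟩ := hder ((Finset.range α).image fun i => PowerSeries.coeff i u)
    (Finset.card_image_le.trans (by simp))
  set h := psDer D u with hh
  have hdvd : PowerSeries.X ^ α ∣ h := by
    rw [PowerSeries.X_pow_dvd_iff]
    intro i hi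
    rw [hh, psDer_coeff]
    exact hDS _ (Finset.mem_image.mpr ⟨i, Finset.mem_range.mpr hi, rfl⟩)
  have hkill : ∀ (δ : AbsDer (LaurentSeries L)),
      (∀ e, δ (algebraMap E (LaurentSeries L) e) = 0) → ∀ c, δ c = 0 →
      ∀ a ∈ IntermediateField.adjoin E {c}, δ a = 0 := by
    intro δ hδ c hc a ha
    have h1 : IntermediateField.adjoin E {c} ≤ constField δ hδ := by
      rw [IntermediateField.adjoin_le_iff, Set.singleton_subset_iff]
      exact hc
    exact h1 ha
  have hkillalg : ∀ (δ : AbsDer (LaurentSeries L)),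
      (∀ e, δ (algebraMap E (LaurentSeries L) e) = 0) → ∀ c, δ c = 0 →
      ∀ a, IsAlgebraic (IntermediateField.adjoin E {c}) a → δ a = 0 := by
    intro δ hδ c hc a ha
    have : CharZero (IntermediateField.adjoin E {c}) :=
      charZero_of_injective_algebraMap
        (algebraMap E (IntermediateField.adjoin E {c})).injective
    exact der_eq_zero_of_algebraic (A := IntermediateField.adjoin E {c}) δ
      (fun e => hkill δ hδ c hc _ e.2) a ha
  have hh0 : h ≠ 0 := by
    intro h0
    refine hDx (hkillalg _ hDE (ι u) ?_ x (hualg x hxF))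
    rw [hι, coeffDer_ofPowerSeries, ← hh, h0, map_zero]
  have hιh : ι h ≠ 0 := fun h0 => hh0 (hιinj (h0.trans (map_zero _).symm))
  -- `δ w` is divisible by `δ u` for all power series `w` in `F`
  obtain ⟨a, g, hg, hag⟩ : ∃ (a : ℕ) (g : PowerSeries L), IsUnit g ∧ h = PowerSeries.X ^ a * g :=
    ⟨_, _, PowerSeries.isUnit_divided_by_X_pow_order hh0,
      PowerSeries.X_pow_order_mul_divXPowOrder.symm⟩
  have htrap : ∀ w ∈ psSubring F, h ∣ psDer D w := by
    intro w hw
    rw [hag, hg.mul_right_dvd]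
    refine trap (psDer D) (psDer_X D) (psSubring F) (psSubring_saturated F ht) a ?_ w hw
    intro w hw
    obtain ⟨q, hq1, hq2, hq3⟩ := exists_residue_relation F ht u w huF
      (isAlgebraic_exchange F x halg _ huF hutr _ hw) hures
    refine ⟨q, fun i => ⟨(hq1 i).1, ?_⟩, hq2, hq3⟩
    refine Dvd.dvd.trans ?_ ((hq1 i).2 (psDer D) ?_)
    · rw [← hh, hag]
      exact dvd_mul_right _ _
    · rintro e ⟨e', he'⟩
      apply hιinj
      rw [hι, ← coeffDer_ofPowerSeries, ← he', hDE, map_zero]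
  -- the derivation `∂ = δ / δ u`
  let P : AbsDer (LaurentSeries L) := (ι h)⁻¹ • coeffDer D
  have hPapp : ∀ w, P w = (ι h)⁻¹ * coeffDer D w := fun w => rfl
  have hPE : ∀ e, P (algebraMap E (LaurentSeries L) e) = 0 := fun e => by
    rw [hPapp, hDE, mul_zero]
  have hPu : P (ι u) = 1 := by
    rw [hPapp, hι, coeffDer_ofPowerSeries]
    exact inv_mul_cancel₀ hιh
  have hP1 : P 1 = 0 := by
    rw [← map_one (algebraMap E (LaurentSeries L)), hPE]
  have hPF : ∀ w ∈ F, P w ∈ F := by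
    intro w hw
    refine der_mem_of_algebraic P (IntermediateField.adjoin E {ι u}) F ?_ ?_ w hw (hualg w hw)
    · rw [IntermediateField.adjoin_le_iff, Set.singleton_subset_iff]
      exact huF
    · intro w hw
      induction hw using IntermediateField.adjoin_induction with
      | mem w hw =>
        rw [Set.mem_singleton_iff.mp hw, hPu]
        exact one_mem _
      | algebraMap e =>
        rw [hPE]
        exact zero_mem _
      | add a b _ _ ha hb =>
        rw [map_add]
        exact add_mem ha hb
      | inv a ha' ha =>
        by_cases ha0 : a = 0
        · rw [ha0, inv_zero, map_zero]
          exact zero_mem _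
        have h1 := AbsDer.map_mul P a a⁻¹
        rw [mul_inv_cancel₀ ha0, hP1] at h1
        have h2 : P a⁻¹ = -(a⁻¹ * a⁻¹ * P a) := by
          field_simp at h1 ⊢
          linear_combination -h1
        rw [h2]
        exact neg_mem (mul_mem (mul_mem (inv_mem ha') (inv_mem ha')) ha)
      | mul a b ha' hb' ha hb =>
        rw [AbsDer.map_mul]
        exact add_mem (mul_mem ha' hb) (mul_mem hb' ha)
  have hPV : ∀ w ∈ psSubring F, ∃ w' ∈ psSubring F, P (ι w) = ι w' := by
    intro w hw
    obtain ⟨w', hw'⟩ := htrap w hw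
    have h1 : P (ι w) = ι w' := by
      rw [hPapp, hι, coeffDer_ofPowerSeries, hw', map_mul]
      exact inv_mul_cancel_left₀ hιh _
    refine ⟨w', ?_, h1⟩
    rw [mem_psSubring, ← hι, ← h1]
    exact hPF _ hw
  have hPiter : ∀ (i : ℕ), ∀ w ∈ psSubring F, ∃ w' ∈ psSubring F, P^[i] (ι w) = ι w' := by
    intro i
    induction i with
    | zero => exact fun w hw => ⟨w, hw, rfl⟩
    | succ i ih =>
      intro w hw
      obtain ⟨w', hw', h1⟩ := ih w hw
      rw [Function.iterate_succ_apply', h1]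
      exact hPV w' hw'
  have hconst : ∀ c ∈ F, P c = 0 → c ∈ Set.range (algebraMap E (LaurentSeries L)) := by
    intro c hcF hc
    refine hcl c hcF (by_contra fun hctr => ?_)
    have h1 := hkillalg P hPE c hc (ι u) (IntermediateField.isAlgebraic_adjoin_iff.mpr
      (isAlgebraic_exchange F x halg c hcF hctr _ huF))
    rw [hPu] at h1
    exact one_ne_zero h1
  refine core_numeric α d r hd hr hr0 fun M hM => ?_
  let mp : Fin (M * d) → PowerSeries L := fun j =>
    xp ^ ((finProdFinEquiv.symm j).1 : ℕ) * yp ^ ((finProdFinEquiv.symm j).2 : ℕ)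
  have hyV : yp ∈ psSubring F := by rw [mem_psSubring, ← hι, hyp]; exact hyF
  have hmpV : ∀ j, mp j ∈ psSubring F := fun j =>
    mul_mem (pow_mem hxV _) (pow_mem hyV _)
  have hW := wronskian_det_ne_zero P F hPF (fun j => ι (mp j)) hmpV (by
    intro c hcF hc hsum
    choose e he using fun i => hconst (c i) (hcF i) (hc i)
    have h1 := (Fintype.linearIndependent_iff.mp (hindep M)) (fun p => e (finProdFinEquiv p)) (by
      rw [← hsum, ← finProdFinEquiv.sum_comp]
      refine Finset.sum_congr rfl fun p _ => ?_
      rw [Algebra.smul_def, he]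
      simp only [mp, Equiv.symm_apply_apply, map_mul, map_pow]
      rw [hι, hxp, hyp])
    intro i
    have h2 := h1 (finProdFinEquiv.symm i)
    rw [Equiv.apply_symm_apply] at h2
    rw [← he, h2, map_zero])
  -- the Wronskian for `∂` has entries, hence determinant, in `L[[t]]`
  choose N hN using fun i j : Fin (M * d) => hPiter i (mp j) (hmpV j)
  have hdet1 : (Matrix.of fun i j : Fin (M * d) => P^[(i : ℕ)] (ι (mp j))).det =
      ι (Matrix.of N).det := by
    rw [RingHom.map_det]
    congr 1
    ext1 i j
    exact (hN i j).2
  have hdet2 : (Matrix.of fun i j : Fin (M * d) => (coeffDer D)^[(i : ℕ)] (ι (mp j))).det =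
      ι (Matrix.of fun i j : Fin (M * d) => (psDer D)^[(i : ℕ)] (mp j)).det := by
    rw [RingHom.map_det]
    congr 1
    ext1 i j
    exact coeffDer_iterate D _ _
  -- the Wronskian for `δ = δ u • ∂` is divisible by `(δ u) ^ (0 + 1 + ⋯)`
  have hDP : coeffDer D = ι h • P := by
    refine DFunLike.ext _ _ fun w => ?_
    exact (mul_inv_cancel_left₀ hιh _).symm
  rw [hDP, wronskian_scale, hdet1] at hdet2
  set W := (Matrix.of fun i j : Fin (M * d) => (psDer D)^[(i : ℕ)] (mp j)).det with hWdef
  have hdet3 : (∏ i : Fin (M * d), h ^ (i : ℕ)) * (Matrix.of N).det = W := by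
    apply hιinj
    rw [map_mul, map_prod]
    simp only [map_pow]
    exact hdet2
  have hW0 : W ≠ 0 := by
    rw [← hdet3]
    refine mul_ne_zero (Finset.prod_ne_zero_iff.mpr fun i _ => pow_ne_zero _ hh0) fun h0 => hW ?_
    rw [hdet1, h0, map_zero]
  have hWX : PowerSeries.X ^ (α * ∑ i : Fin (M * d), (i : ℕ)) ∣ W := by
    rw [← hdet3, Finset.prod_pow_eq_pow_sum, pow_mul]
    exact (pow_dvd_pow_of_dvd hdvd _).mul_right _
  have hWdeg := wronskian_degree D xp yp (r - 1) hxdeg hydeg M d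
  by_contra! hlt
  apply hW0
  ext n
  rw [map_zero]
  by_cases hn : n < α * ∑ i : Fin (M * d), (i : ℕ)
  · exact PowerSeries.X_pow_dvd_iff.mp hWX n hn
  · exact hWdeg n (by omega)

/-! ### Linear projections of hypersurfaces -/

lemma prod_linear_coeff {A σ : Type*} [CommRing A] (s : Finset σ) (e : σ → ℕ)
    (l : σ → Polynomial A) (hl : ∀ i, (l i).natDegree ≤ 1) :
    (∏ i ∈ s, l i ^ e i).natDegree ≤ ∑ i ∈ s, e i ∧
      (∏ i ∈ s, l i ^ e i).coeff (∑ i ∈ s, e i) = ∏ i ∈ s, (l i).coeff 1 ^ e i := by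
  classical
  induction s using Finset.induction_on with
  | empty => simp
  | insert a s ha ih =>
    rw [Finset.prod_insert ha, Finset.sum_insert ha, Finset.prod_insert ha]
    have h1 : (l a ^ e a).natDegree ≤ e a := by
      simpa using Polynomial.natDegree_pow_le_of_le (e a) (hl a)
    refine ⟨Polynomial.natDegree_mul_le_of_le h1 ih.1, ?_⟩
    rw [Polynomial.coeff_mul_add_eq_of_natDegree_le h1 ih.1, ih.2]
    congr 1
    simpa using Polynomial.coeff_pow_of_natDegree_le (m := e a) (hl a)

/-- The value of the leading form at a point is the leading coefficient of the restriction to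
lines in that direction. -/
lemma aeval_linear_coeff {A σ E : Type*} [Fintype σ] [Field E] [CommRing A] [Algebra E A]
    (f : MvPolynomial σ E) (l : σ → Polynomial A) (hl : ∀ i, (l i).natDegree ≤ 1)
    (b : σ → E) (hb : ∀ i, (l i).coeff 1 = algebraMap E A (b i)) (d : ℕ)
    (hd : f.totalDegree ≤ d) :
    (MvPolynomial.aeval l f).natDegree ≤ d ∧ (MvPolynomial.aeval l f).coeff d =
      algebraMap E A (MvPolynomial.eval b (MvPolynomial.homogeneousComponent d f)) := by
  have hs : ∀ s ∈ f.support, ∑ i, s i ≤ d := fun s hs => by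
    rw [← Finsupp.degree_eq_sum]
    exact (MvPolynomial.le_totalDegree (by simpa [Finsupp.degree] using hs)).trans hd
  have h1 := fun s : σ →₀ ℕ => prod_linear_coeff Finset.univ s l hl
  rw [MvPolynomial.aeval_def, MvPolynomial.eval₂_eq']
  constructor
  · refine Polynomial.natDegree_sum_le_of_forall_le _ _ fun s hsf => ?_
    rw [Polynomial.algebraMap_apply]
    exact (Polynomial.natDegree_C_mul_le _ _).trans ((h1 s).1.trans (hs s hsf))
  · rw [MvPolynomial.homogeneousComponent_apply, map_sum, map_sum, Polynomial.finsetSum_coeff,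
      Finset.sum_filter]
    refine Finset.sum_congr rfl fun s hsf => ?_
    rw [Polynomial.algebraMap_apply, Polynomial.coeff_C_mul]
    split_ifs with hsd
    · rw [Finsupp.degree_eq_sum] at hsd
      rw [← hsd, (h1 s).2, MvPolynomial.eval_monomial, map_mul, Finsupp.prod_fintype _ _ (by simp),
        map_prod]
      simp only [hb, map_pow]
    · rw [Finsupp.degree_eq_sum] at hsd
      rw [Polynomial.coeff_eq_zero_of_natDegree_lt, mul_zero]
      exact (h1 s).1.trans_lt (lt_of_le_of_ne (hs s hsf) hsd)

/-- The leading form of a polynomial is non-zero at some point `(1, c)` with `c` in a given infinite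
subfield. -/
lemma exists_direction {k E : Type*} [Field k] [Infinite k] [Field E] (φ : k →+* E) (N d : ℕ)
    (f : MvPolynomial (Fin (N + 1)) E) (hf : f ≠ 0) (hd : f.totalDegree = d) :
    ∃ c : Fin N → k, MvPolynomial.eval (Fin.cons 1 fun i => φ (c i))
      (MvPolynomial.homogeneousComponent d f) ≠ 0 := by
  set g := MvPolynomial.homogeneousComponent d f with hg
  have hg0 : g ≠ 0 := by
    obtain ⟨s, hs, hsd⟩ := Finset.exists_mem_eq_sup f.support
      (MvPolynomial.support_nonempty.mpr hf) (fun s => s.sum fun _ e => e)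
    intro h0
    have h1 : MvPolynomial.coeff s g = MvPolynomial.coeff s f := by
      rw [hg, MvPolynomial.coeff_homogeneousComponent, if_pos]
      rw [← hd]
      exact hsd.symm
    rw [h0, MvPolynomial.coeff_zero] at h1
    exact MvPolynomial.mem_support_iff.mp hs h1.symm
  by_contra! hcon
  refine hg0 (MvPolynomial.funext_set (fun _ => φ '' {0}ᶜ)
    (fun _ => (Set.Finite.infinite_compl (Set.finite_singleton _)).image φ.injective.injOn)
    fun a ha => ?_)
  rw [map_zero]
  have ha' : ∀ i, ∃ b : k, b ≠ 0 ∧ φ b = a i := fun i => ha i (Set.mem_univ i)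
  choose b hb0 hb using ha'
  have h2 := hcon fun i => b i.succ / b 0
  have h3 : a = fun i => φ (b 0) * (Fin.cons 1 (fun i => φ (b i.succ / b 0)) : _ → E) i := by
    funext i
    rw [← hb]
    refine Fin.cases ?_ (fun j => ?_) i
    · simp
    · rw [Fin.cons_succ, ← map_mul, mul_div_cancel₀ _ (hb0 0)]
  have h4 : g.IsHomogeneous d := MvPolynomial.homogeneousComponent_isHomogeneous d f
  rw [h3]
  rw [MvPolynomial.eval_eq'] at h2 ⊢
  have h5 : ∀ s ∈ g.support, ∑ i, s i = d := fun s hs => by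
    rw [← Finsupp.degree_eq_sum, Finsupp.degree_eq_weight_one]
    exact h4 (MvPolynomial.mem_support_iff.mp hs)
  simp only [mul_pow, Finset.prod_mul_distrib, Finset.prod_pow_eq_pow_sum]
  rw [Finset.sum_congr rfl fun s hs => by rw [h5 s hs, mul_left_comm], ← Finset.mul_sum, h2,
    mul_zero]

open scoped IntermediateField.algebraAdjoinAdjoin in
/-- After a linear change of coordinates, the first coordinate of a zero of an irreducible `f` of
degree `d` is algebraic over the field generated by the other ones, of degree exactly `d` when
these are independent. -/
lemma exists_projection {k E Ω : Type*} [Field k] [Infinite k] [Field E] [Field Ω] [Algebra E Ω]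
    (φ : k →+* E) (N d : ℕ) (f : MvPolynomial (Fin (N + 1)) E) (hf : Irreducible f)
    (hd : f.totalDegree = d) (x : Fin (N + 1) → Ω) (hx : MvPolynomial.aeval x f = 0) :
    ∃ c : Fin N → k, ∃ T : Fin N → Ω, (∀ i, x i.succ = T i + algebraMap E Ω (φ (c i)) * x 0) ∧
      IsAlgebraic (IntermediateField.adjoin E (Set.range T)) (x 0) ∧
      (AlgebraicIndependent E T →
        (minpoly (IntermediateField.adjoin E (Set.range T)) (x 0)).natDegree = d) := by
  obtain ⟨c, hc⟩ := exists_direction φ N d f hf.ne_zero hd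
  let T : Fin N → Ω := fun i => x i.succ - algebraMap E Ω (φ (c i)) * x 0
  have hT : ∀ i, x i.succ = T i + algebraMap E Ω (φ (c i)) * x 0 := fun i => by
    simp only [T]; ring
  refine ⟨c, T, hT, ?_⟩
  -- the shear, followed by the identification with polynomials in one variable
  let A := MvPolynomial (Fin N) E
  let l : Fin (N + 1) → Polynomial A := Fin.cons Polynomial.X fun i =>
    Polynomial.C (MvPolynomial.X i) + Polynomial.C (MvPolynomial.C (φ (c i))) * Polynomial.X
  let sh : (Fin N → E) → MvPolynomial (Fin (N + 1)) E →ₐ[E] MvPolynomial (Fin (N + 1)) E :=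
    fun b => MvPolynomial.aeval (Fin.cons (MvPolynomial.X 0) fun i =>
      MvPolynomial.X i.succ + MvPolynomial.C (b i) * MvPolynomial.X 0)
  have hsh0 : ∀ b, sh b (MvPolynomial.X 0) = MvPolynomial.X 0 := fun b => by simp [sh]
  have hshs : ∀ b i, sh b (MvPolynomial.X i.succ) =
    MvPolynomial.X i.succ + MvPolynomial.C (b i) * MvPolynomial.X 0 := fun b i => by simp [sh]
  have hshinv : ∀ b b' : Fin N → E, (∀ i, b i + b' i = 0) → (sh b).comp (sh b') = AlgHom.id _ _ := by
    intro b b' hbb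
    refine MvPolynomial.algHom_ext fun i => ?_
    refine Fin.cases ?_ (fun j => ?_) i
    · simp [hsh0]
    · rw [AlgHom.comp_apply, hshs, map_add, map_mul, hshs, hsh0, ← MvPolynomial.algebraMap_eq,
        AlgHom.commutes, AlgHom.id_apply, add_assoc, ← add_mul, ← map_add, hbb, map_zero, zero_mul,
        add_zero]
  let e : MvPolynomial (Fin (N + 1)) E ≃ₐ[E] Polynomial A :=
    (AlgEquiv.ofAlgHom (sh fun i => φ (c i)) (sh fun i => - φ (c i))
      (hshinv _ _ fun i => by ring) (hshinv _ _ fun i => by ring)).trans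
      (MvPolynomial.finSuccEquiv E N)
  have he : ∀ g, e g = MvPolynomial.aeval l g := by
    intro g
    have : (e : MvPolynomial (Fin (N + 1)) E →ₐ[E] Polynomial A) = MvPolynomial.aeval l := by
      refine MvPolynomial.algHom_ext fun i => ?_
      rw [MvPolynomial.aeval_X]
      change MvPolynomial.finSuccEquiv E N (sh _ (MvPolynomial.X i)) = _
      refine Fin.cases ?_ (fun j => ?_) i
      · rw [hsh0, MvPolynomial.finSuccEquiv_X_zero]
        rfl
      · rw [hshs, map_add, map_mul, MvPolynomial.finSuccEquiv_X_succ,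
          MvPolynomial.finSuccEquiv_X_zero, ← MvPolynomial.algebraMap_eq, AlgEquiv.commutes]
        rfl
    exact DFunLike.congr_fun this g
  set a := MvPolynomial.eval (Fin.cons 1 fun i => φ (c i))
      (MvPolynomial.homogeneousComponent d f) with ha
  have hl : ∀ i, (l i).natDegree ≤ 1 := by
    intro i
    refine Fin.cases ?_ (fun j => ?_) i
    · exact Polynomial.natDegree_X_le
    · simp only [l, Fin.cons_succ]
      compute_degree
  have hcoeff := aeval_linear_coeff f l hl (Fin.cons 1 fun i => φ (c i)) (by
    intro i
    refine Fin.cases ?_ (fun j => ?_) i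
    · simp [l]
    · simp [l, Polynomial.coeff_C]
      rfl) d hd.le
  rw [← he, ← ha] at hcoeff
  set P : Polynomial A := e f with hP
  have hPirr : Irreducible P := (MulEquiv.irreducible_iff e).mpr hf
  let B := Algebra.adjoin E (Set.range T)
  let K := IntermediateField.adjoin E (Set.range T)
  let τ : A →ₐ[E] B := (MvPolynomial.aeval T).codRestrict B fun p => by
    have : MvPolynomial.aeval T p ∈ (MvPolynomial.aeval T : A →ₐ[E] Ω).range := ⟨p, rfl⟩
    rwa [← Algebra.adjoin_range_eq_range_aeval] at this
  have hτ : ∀ p, (τ p : Ω) = MvPolynomial.aeval T p := fun p => rfl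
  have hroot : Polynomial.eval₂ (MvPolynomial.aeval T : A →ₐ[E] Ω).toRingHom (x 0) P = 0 := by
    rw [← hx, hP]
    let Ψ : Polynomial A →+* Ω := Polynomial.eval₂RingHom
      (MvPolynomial.aeval T : A →ₐ[E] Ω).toRingHom (x 0)
    have : Ψ.comp (e : MvPolynomial (Fin (N + 1)) E ≃+* Polynomial A).toRingHom =
        (MvPolynomial.aeval x : _ →ₐ[E] Ω).toRingHom := by
      refine MvPolynomial.ringHom_ext (fun b => ?_) fun i => ?_
      · change Ψ (e (algebraMap E _ b)) = MvPolynomial.aeval x (algebraMap E _ b)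
        rw [AlgEquiv.commutes, AlgHom.commutes, Polynomial.algebraMap_apply]
        change Polynomial.eval₂ _ _ _ = _
        rw [Polynomial.eval₂_C]
        exact AlgHom.commutes _ _
      · change Ψ (e (MvPolynomial.X i)) = MvPolynomial.aeval x (MvPolynomial.X i)
        rw [he, MvPolynomial.aeval_X, MvPolynomial.aeval_X]
        change Polynomial.eval₂ _ _ _ = _
        refine Fin.cases ?_ (fun j => ?_) i
        · simp [l]
        · simp only [l, Fin.cons_succ, AlgHom.toRingHom_eq_coe, Polynomial.eval₂_add,
            Polynomial.eval₂_mul, Polynomial.eval₂_C, Polynomial.eval₂_X, RingHom.coe_coe, hT j]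
          exact congrArg₂ (fun a b => a + b * x 0) (MvPolynomial.aeval_X T j)
            (MvPolynomial.aeval_C T (φ (c j)))
    exact DFunLike.congr_fun this f
  let P₁ : Polynomial A := Polynomial.C (algebraMap E A a⁻¹) * P
  have hunit : IsUnit (Polynomial.C (algebraMap E A a⁻¹)) :=
    Polynomial.isUnit_C.mpr ((IsUnit.mk0 _ (inv_ne_zero hc)).map _)
  have hP₁irr : Irreducible P₁ := (irreducible_isUnit_mul hunit).mpr hPirr
  have hP₁coeff : P₁.coeff d = 1 := by
    rw [Polynomial.coeff_C_mul, hcoeff.2, ← map_mul, inv_mul_cancel₀ hc, map_one]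
  have hP₁deg : P₁.natDegree ≤ d := (Polynomial.natDegree_C_mul_le _ _).trans hcoeff.1
  have hP₁monic : P₁.Monic := Polynomial.monic_of_natDegree_le_of_coeff_eq_one d hP₁deg hP₁coeff
  have hP₁nat : P₁.natDegree = d := le_antisymm hP₁deg
    (Polynomial.le_natDegree_of_ne_zero (by rw [hP₁coeff]; exact one_ne_zero))
  let Q : Polynomial K := (P₁.map τ.toRingHom).map (algebraMap B K)
  have hQmonic : Q.Monic := (hP₁monic.map _).map _
  have hQroot : Polynomial.aeval (x 0) Q = 0 := by
    rw [Polynomial.aeval_def, Polynomial.eval₂_map, Polynomial.eval₂_map, Polynomial.eval₂_mul]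
    refine mul_eq_zero_of_right _ ?_
    rw [← hroot]
    rfl
  refine ⟨⟨Q, hQmonic.ne_zero, hQroot⟩, fun hind => ?_⟩
  have hBcl : IsIntegrallyClosed B :=
    IsIntegrallyClosed.of_equiv (hind.aevalEquiv : A ≃ₐ[E] B).toRingEquiv
  have hQirr : Irreducible Q := by
    refine (Polynomial.Monic.irreducible_iff_irreducible_map_fraction_map
      (hP₁monic.map τ.toRingHom)).mp ?_
    have h1 : P₁.map τ.toRingHom =
        Polynomial.mapEquiv (hind.aevalEquiv : A ≃ₐ[E] B).toRingEquiv P₁ := by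
      change _ = Polynomial.map _ P₁
      congr 1
    rw [h1]
    exact (MulEquiv.irreducible_iff _).mpr hP₁irr
  rw [← minpoly.eq_of_irreducible_of_monic hQirr hQroot hQmonic]
  change ((P₁.map τ.toRingHom).map (algebraMap B K)).natDegree = d
  rw [(hP₁monic.map _).natDegree_map, hP₁monic.natDegree_map, hP₁nat]

/-! ### The bound at a generic point -/

lemma linearIndependent_pow_of_transcendental {Z S : Type*} [Field Z] [Field S] [Algebra Z S]
    (x : S) (hx : Transcendental Z x) (M : ℕ) :
    LinearIndependent Z (fun i : Fin M => x ^ (i : ℕ)) := by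
  have h2 := (Polynomial.basisMonomials Z).linearIndependent.map'
    (Polynomial.aeval x).toLinearMap
    (LinearMap.ker_eq_bot.mpr (transcendental_iff_injective.mp hx))
  have h3 := h2.comp (fun i : Fin M => (i : ℕ)) Fin.val_injective
  have hfun : (fun i : Fin M => x ^ (i : ℕ)) = ((Polynomial.aeval x).toLinearMap ∘
      Polynomial.basisMonomials Z) ∘ (fun i : Fin M => (i : ℕ)) := by
    funext i
    simp
  rw [hfun]
  exact h3

lemma linearIndependent_mul_pow {Z S Ω : Type*} [Field Z] [Field S] [Field Ω] [Algebra Z S]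
    [Algebra Z Ω] [Algebra S Ω] [IsScalarTower Z S Ω] (x : S) (y : Ω) (hx : Transcendental Z x)
    (M : ℕ) : LinearIndependent Z (fun p : Fin M × Fin (minpoly S y).natDegree =>
      algebraMap S Ω x ^ (p.1 : ℕ) * y ^ (p.2 : ℕ)) := by
  have h := linearIndependent_smul (linearIndependent_pow_of_transcendental x hx M)
    (linearIndependent_pow (K := S) y)
  simpa only [Algebra.smul_def, map_pow] using h

lemma linearIndependent_monomials {Z Ω : Type*} [Field Z] [Field Ω] [Algebra Z Ω] (x y : Ω)
    (hx : Transcendental Z x) (d : ℕ)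
    (hd : (minpoly (IntermediateField.adjoin Z {x}) y).natDegree = d) (M : ℕ) :
    LinearIndependent Z (fun p : Fin M × Fin d => x ^ (p.1 : ℕ) * y ^ (p.2 : ℕ)) := by
  subst hd
  have hx' : Transcendental Z (IntermediateField.AdjoinSimple.gen Z x) := fun h =>
    hx (h.algebraMap (A := Ω))
  exact linearIndependent_mul_pow (S := IntermediateField.adjoin Z {x})
    (IntermediateField.AdjoinSimple.gen Z x) y hx' M

/-- Intermediate fields between `K` and the simple extension `K(y)` are finite in number. -/
lemma finite_between {E Ω : Type*} [Field E] [Field Ω] [Algebra E Ω] (K : IntermediateField E Ω)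
    (y : Ω) (hy : IsAlgebraic K y) :
    {G : IntermediateField E Ω | K ≤ G ∧
      G ≤ (IntermediateField.adjoin K {y}).restrictScalars E}.Finite := by
  let Y := IntermediateField.adjoin K {y}
  have h1 : Algebra.IsAlgebraic K Y := IntermediateField.isAlgebraic_adjoin_simple hy.isIntegral
  have h2 : Finite (IntermediateField K Y) := by
    refine Field.finite_intermediateField_of_exists_primitive_element K Y
      ⟨IntermediateField.AdjoinSimple.gen K y, ?_⟩
    apply IntermediateField.lift_injective
    rw [IntermediateField.lift_adjoin_simple, IntermediateField.lift_top]
    rfl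
  refine (Set.finite_range fun H : IntermediateField K Y =>
    (IntermediateField.lift H).restrictScalars E).subset ?_
  rintro G ⟨hKG, hGY⟩
  have hle : IntermediateField.extendScalars hKG ≤ Y := fun v hv => hGY hv
  refine ⟨IntermediateField.restrict hle, ?_⟩
  change IntermediateField.restrictScalars E (IntermediateField.lift _) = G
  rw [IntermediateField.lift_restrict]
  rfl

/-- A dependent family has a member which is algebraic over the other ones. -/
lemma exists_algebraic_over_rest {E Ω : Type*} [Field E] [Field Ω] [Algebra E Ω] {N : ℕ}
    (T : Fin N → Ω) (hT : ¬ AlgebraicIndependent E T) :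
    ∃ i, IsAlgebraic (IntermediateField.adjoin E (T '' {i}ᶜ)) (T i) := by
  by_contra! hcon
  refine hT (algebraicIndependent_of_finite_type' (algebraMap E Ω).injective
    fun s _ _ i hi halg => hcon i ?_)
  refine isAlgebraic_mono (A := IntermediateField.adjoin E (T '' s)) ?_
    (IntermediateField.isAlgebraic_adjoin_iff.mpr halg)
  refine IntermediateField.adjoin.mono _ _ _ (Set.image_mono fun j hj => ?_)
  rintro rfl
  exact hi hj

/-- A derivation killing the algebra structure and a set of generators kills every element
algebraic over the field they generate. -/
lemma der_kills {E Ω : Type*} [Field E] [CharZero E] [Field Ω] [Algebra E Ω] (δ : AbsDer Ω)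
    (hE : ∀ e, δ (algebraMap E Ω e) = 0) (S : Set Ω) (hS : ∀ s ∈ S, δ s = 0) (w : Ω)
    (hw : IsAlgebraic (IntermediateField.adjoin E S) w) : δ w = 0 := by
  have : CharZero (IntermediateField.adjoin E S) :=
    charZero_of_injective_algebraMap (algebraMap E (IntermediateField.adjoin E S)).injective
  have h1 : IntermediateField.adjoin E S ≤ constField δ hE :=
    IntermediateField.adjoin_le_iff.mpr hS
  exact der_eq_zero_of_algebraic (A := IntermediateField.adjoin E S) δ (fun e => h1 e.2) w hw

/-- The coefficients in degrees `0, …, r - 1` of a finite family of Laurent series. -/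
noncomputable def coeffFinset {L ι : Type*} [Field L] [DecidableEq L] [Fintype ι]
    (r : ℕ) (T : ι → LaurentSeries L) : Finset L :=
  Finset.univ.image fun p : Fin r × ι => (T p.2).coeff (p.1 : ℕ)

lemma coeffFinset_card {L ι : Type*} [Field L] [DecidableEq L] [Fintype ι]
    (r : ℕ) (T : ι → LaurentSeries L) : (coeffFinset r T).card ≤ r * Fintype.card ι := by
  refine Finset.card_image_le.trans ?_
  simp

lemma coeffDer_eq_zero {κ L ι : Type*} [Field κ] [Field L] [DecidableEq L] [Algebra κ L]
    [Fintype ι] (r : ℕ) (T : ι → LaurentSeries L)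
    (hT : ∀ i, ∀ n : ℤ, (n < 0 ∨ r ≤ n) → (T i).coeff n = 0)
    (D : Derivation κ L L) (hD : ∀ s ∈ coeffFinset r T, D s = 0) (i : ι) :
    coeffDer D (T i) = 0 := by
  ext n
  rw [coeffDer_coeff, HahnSeries.coeff_zero]
  by_cases hn : n < 0 ∨ r ≤ n
  · rw [hT i n hn, map_zero]
  · push Not at hn
    refine hD _ (Finset.mem_image.mpr ⟨(⟨n.toNat, by omega⟩, i), Finset.mem_univ _, ?_⟩)
    simp only
    rw [Int.toNat_of_nonneg hn.1]

/-- The bound at a generic point. The field `E` plays the role of `ℂ((t))`: it contains the powers of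
`t`, is algebraically closed in `L((t))`, and is killed by coefficientwise derivations. If a zero of
`f` in `L((t))` has coordinates which are polynomials in `t` of degree `< r`, and if a derivation of
`L` killing their coefficients is zero, then the transcendence degree of `L` is at most
`r * m + α`. -/
lemma generic_point {k L E : Type} [Field k] [CharZero k] [Field L] [Algebra k L] [Field E]
    [Algebra E (LaurentSeries L)] (φ : k →+* E)
    (hφ : ∀ c, algebraMap E (LaurentSeries L) (φ c) = HahnSeries.C (algebraMap k L c))
    (ht : ∀ n : ℤ, HahnSeries.single n (1 : L) ∈ Set.range (algebraMap E (LaurentSeries L)))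
    (hcl : ∀ v, IsAlgebraic E v → v ∈ Set.range (algebraMap E (LaurentSeries L)))
    (hDE : ∀ (D : Derivation k L L) (e : E), coeffDer D (algebraMap E (LaurentSeries L) e) = 0)
    (m d r α : ℕ) (hd : 1 ≤ d) (hr0 : 0 < r) (hr : r ≤ α * d)
    (f : MvPolynomial (Fin (m + 2)) E) (hf : Irreducible f) (hfd : f.totalDegree = d)
    (x : Fin (m + 2) → LaurentSeries L) (hx : MvPolynomial.aeval x f = 0)
    (hxr : ∀ i, ∀ n : ℤ, (n < 0 ∨ r ≤ n) → (x i).coeff n = 0)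
    (hgen : ∀ D : Derivation k L L, (∀ i, coeffDer D (x i) = 0) → D = 0) :
    Algebra.trdeg k L ≤ (r * m + α : ℕ) := by
  classical
  by_contra! htr
  have hkill : ∀ S : Finset L, S.card ≤ r * m + α →
      ∃ D : Derivation k L L, (∀ s ∈ S, D s = 0) ∧ D ≠ 0 := fun S hS =>
    exists_derivation_killing (S : Set L) (lt_of_le_of_lt (by
      have h1 : Cardinal.mk (S : Set L) = S.card := Cardinal.mk_coe_finset
      rw [h1]
      exact_mod_cast hS) htr)
  have hL0 : CharZero L := charZero_of_injective_algebraMap (algebraMap k L).injective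
  have hE0 : CharZero E := charZero_of_injective_ringHom φ.injective
  obtain ⟨c, T, hxT, hyalg, hmin⟩ := exists_projection φ (m + 1) d f hf hfd x hx
  have hTr : ∀ i, ∀ n : ℤ, (n < 0 ∨ r ≤ n) → (T i).coeff n = 0 := by
    intro i n hn
    have h1 : T i = x i.succ - HahnSeries.C (algebraMap k L (c i)) * x 0 := by
      rw [hxT, hφ]; ring
    rw [h1, HahnSeries.coeff_sub, HahnSeries.C_mul_eq_smul, HahnSeries.coeff_smul, hxr _ n hn,
      hxr _ n hn, smul_zero, sub_zero]
  have hDT : ∀ D : Derivation k L L, (∀ i, coeffDer D (T i) = 0) → D = 0 := by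
    intro D hD
    have h0 : coeffDer D (x 0) = 0 := der_kills (coeffDer D) (hDE D) (Set.range T)
      (by rintro _ ⟨i, rfl⟩; exact hD i) _ hyalg
    refine hgen D fun i => ?_
    refine Fin.cases h0 (fun j => ?_) i
    rw [hxT, map_add, AbsDer.map_mul, hD, h0, hDE]
    simp
  by_cases hind : AlgebraicIndependent E T
  swap
  -- dependent case: killing the coefficients of `m` of the `T j` kills the last one as well
  · obtain ⟨i, hi⟩ := exists_algebraic_over_rest T hind
    obtain ⟨D, hDk, hD0⟩ := hkill (coeffFinset r fun j => T (i.succAbove j)) (by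
      refine (coeffFinset_card _ _).trans ?_
      simp)
    refine hD0 (hDT D ?_)
    have h1 : ∀ j, coeffDer D (T (i.succAbove j)) = 0 :=
      coeffDer_eq_zero r _ (fun j => hTr _) D hDk
    have h2 : ∀ j, j ≠ i → coeffDer D (T j) = 0 := fun j hj => by
      obtain ⟨j', rfl⟩ := Fin.exists_succAbove_eq hj
      exact h1 j'
    intro j
    by_cases hj : j = i
    · rw [hj]
      refine der_kills (coeffDer D) (hDE D) _ ?_ _ hi
      rintro _ ⟨j, hj, rfl⟩
      exact h2 j hj
    · exact h2 j hj
  have hmin := hmin hind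
  set K := IntermediateField.adjoin E (Set.range T) with hK
  let F : IntermediateField E (LaurentSeries L) :=
    (IntermediateField.adjoin K {x 0}).restrictScalars E
  have hKF : K ≤ F := fun v hv =>
    (IntermediateField.adjoin K {x 0}).algebraMap_mem ⟨v, hv⟩
  have hTK : ∀ i, T i ∈ K := fun i => IntermediateField.subset_adjoin _ _ (Set.mem_range_self i)
  have hyF : x 0 ∈ F := IntermediateField.subset_adjoin K {x 0} rfl
  have hFK : ∀ v ∈ F, IsAlgebraic K v := by
    intro v hv
    have : Algebra.IsAlgebraic K (IntermediateField.adjoin K {x 0}) :=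
      IntermediateField.isAlgebraic_adjoin_simple hyalg.isIntegral
    exact (Algebra.IsAlgebraic.isAlgebraic
      (⟨v, hv⟩ : IntermediateField.adjoin K {x 0})).algebraMap (A := LaurentSeries L)
  -- pass to the base field `Z = E(ℓ)`, over which `F` has transcendence degree one
  obtain ⟨b, hb⟩ := bertini m E F T hind (fun i => hKF (hTK i)) (finite_between K (x 0) hyalg)
    (fun v _ hv => hcl v hv)
  set ℓ : Fin m → LaurentSeries L := fun i => T i.succ + b i * T 0 with hℓ
  set Z := IntermediateField.adjoin E (Set.range ℓ) with hZ
  have hZK : Z ≤ K := by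
    rw [hZ, IntermediateField.adjoin_le_iff]
    rintro _ ⟨i, rfl⟩
    exact add_mem (hTK _) (mul_mem (natCast_mem _ _) (hTK _))
  have hℓZ : ∀ i, ℓ i ∈ Z := fun i => IntermediateField.subset_adjoin _ _ (Set.mem_range_self i)
  have hKZ : (IntermediateField.adjoin Z {T 0}).restrictScalars E = K := by
    rw [hZ, IntermediateField.adjoin_adjoin_left]
    apply le_antisymm
    · rw [IntermediateField.adjoin_le_iff]
      rintro v (hv | rfl)
      · exact hZK (IntermediateField.subset_adjoin _ _ hv)
      · exact hTK 0
    · rw [hK, IntermediateField.adjoin_le_iff]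
      rintro _ ⟨i, rfl⟩
      have h0 : T 0 ∈ IntermediateField.adjoin E (Set.range ℓ ∪ {T 0}) :=
        IntermediateField.subset_adjoin _ _ (Or.inr rfl)
      refine Fin.cases h0 (fun j => ?_) i
      have h1 : T j.succ = ℓ j - b j * T 0 := by simp only [hℓ]; ring
      rw [h1]
      exact sub_mem (IntermediateField.subset_adjoin _ _ (Or.inl (Set.mem_range_self j)))
        (mul_mem (natCast_mem _ _) h0)
  have hT0 : Transcendental Z (T 0) := by
    have h1 : AlgebraicIndependent E (Fin.cons (T 0) ℓ : Fin (m + 1) → LaurentSeries L) := by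
      refine algebraicIndependent_of_mem_adjoin hind fun i => ?_
      have h0 : T 0 ∈ Algebra.adjoin E
          (Set.range (Fin.cons (T 0) ℓ : Fin (m + 1) → LaurentSeries L)) :=
        Algebra.subset_adjoin ⟨0, rfl⟩
      refine Fin.cases h0 (fun j => ?_) i
      have h1 : T j.succ = ℓ j - b j * T 0 := by simp only [hℓ]; ring
      rw [h1]
      exact sub_mem (Algebra.subset_adjoin ⟨j.succ, rfl⟩) (mul_mem (natCast_mem _ _) h0)
    have h2 := h1.transcendental_adjoin (s := Set.range Fin.succ) (i := 0) (by simp)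
    have himg : (Fin.cons (T 0) ℓ : Fin (m + 1) → LaurentSeries L) '' Set.range Fin.succ
        = Set.range ℓ := by
      rw [← Set.range_comp]
      rfl
    rw [himg] at h2
    exact fun h3 => h2 (IntermediateField.isAlgebraic_adjoin_iff.mp h3)
  have hmin' : (minpoly (IntermediateField.adjoin Z {T 0}) (x 0)).natDegree = d := by
    have h1 : (minpoly ((IntermediateField.adjoin Z {T 0}).restrictScalars E) (x 0)).natDegree
        = d := by
      rw [hKZ, hmin]
    exact h1
  refine core (E := Z) (IntermediateField.extendScalars (hZK.trans hKF)) ?_ ?_ (T 0) (x 0)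
    (hKF (hTK 0)) hyF ?_ d r α hd hr0 hr
    (linearIndependent_monomials (T 0) (x 0) hT0 d hmin') (hTr 0) (hxr 0) ?_ (κ := k)
  · intro n
    obtain ⟨e, he⟩ := ht n
    exact ⟨algebraMap E Z e, he⟩
  · intro v hv hva
    exact ⟨⟨v, hb v hv hva⟩, rfl⟩
  · intro v hv
    have h1 : IsAlgebraic ((IntermediateField.adjoin Z {T 0}).restrictScalars E) v := by
      rw [hKZ]
      exact hFK v hv
    exact h1
  · intro S hS
    -- `r * m` conditions make the derivation vanish on `Z`, which leaves `α` free conditions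
    obtain ⟨D, hDk, hD0⟩ := hkill (coeffFinset r ℓ ∪ S) (by
      refine (Finset.card_union_le _ _).trans (add_le_add ?_ hS)
      exact (coeffFinset_card _ _).trans (by simp))
    have hℓr : ∀ i, ∀ n : ℤ, (n < 0 ∨ r ≤ n) → (ℓ i).coeff n = 0 := by
      intro i n hn
      simp only [hℓ]
      rw [← nsmul_eq_mul, HahnSeries.coeff_add, HahnSeries.coeff_nsmul, hTr _ n hn]
      simp [hTr _ n hn]
    have hDℓ : ∀ i, coeffDer D (ℓ i) = 0 := coeffDer_eq_zero r ℓ hℓr D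
      fun s hs => hDk s (Finset.mem_union_left _ hs)
    refine ⟨D, fun s hs => hDk s (Finset.mem_union_right _ hs), fun e => ?_, fun h0 => hD0 ?_⟩
    · refine der_kills (coeffDer D) (hDE D) (Set.range ℓ) ?_ _ (isAlgebraic_algebraMap e)
      rintro _ ⟨i, rfl⟩
      exact hDℓ i
    · refine hDT D fun i => ?_
      refine Fin.cases h0 (fun j => ?_) i
      have h1 : T j.succ = ℓ j - b j * T 0 := by simp only [hℓ]; ring
      rw [h1, map_sub, AbsDer.map_mul, hDℓ, h0, AbsDer.map_natCast]
      simp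

/-! ### Reduction to generic points -/

/-- The ring homomorphism `R((t)) → S((t))` which applies a ring homomorphism to each
coefficient. -/
noncomputable def laurentMap {R S : Type*} [CommRing R] [CommRing S] (ψ : R →+* S) :
    LaurentSeries R →+* LaurentSeries S where
  toFun w := HahnSeries.map w ψ
  map_zero' := by ext; simp
  map_one' := by
    ext n
    rw [HahnSeries.map_coeff, HahnSeries.coeff_one, HahnSeries.coeff_one]
    split_ifs <;> simp
  map_add' a b := by ext; simp
  map_mul' a b := HahnSeries.map_mul (ψ : R →ₙ+* S)

@[simp] lemma laurentMap_coeff {R S : Type*} [CommRing R] [CommRing S] (ψ : R →+* S)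
    (w : LaurentSeries R) (n : ℤ) : (laurentMap ψ w).coeff n = ψ (w.coeff n) := rfl

lemma laurentMap_single {R S : Type*} [CommRing R] [CommRing S] (ψ : R →+* S) (n : ℤ) (a : R) :
    laurentMap ψ (HahnSeries.single n a) = HahnSeries.single n (ψ a) := by
  ext m
  rw [laurentMap_coeff, HahnSeries.coeff_single, HahnSeries.coeff_single]
  split_ifs <;> simp

lemma laurentMap_comp {R S T : Type*} [CommRing R] [CommRing S] [CommRing T] (ψ : R →+* S)
    (χ : S →+* T) : (laurentMap χ).comp (laurentMap ψ) = laurentMap (χ.comp ψ) := rfl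

/-- If the base field is algebraically closed, `k((t))` is algebraically closed in `L((t))`. -/
lemma exists_laurentMap_of_algebraic {k L : Type*} [Field k] [IsAlgClosed k] [CharZero k] [Field L]
    [Algebra k L] [Algebra (LaurentSeries k) (LaurentSeries L)]
    (hmap : algebraMap (LaurentSeries k) (LaurentSeries L) = laurentMap (algebraMap k L))
    (v : LaurentSeries L) (hv : IsAlgebraic (LaurentSeries k) v) :
    v ∈ Set.range (algebraMap (LaurentSeries k) (LaurentSeries L)) := by
  have : CharZero (LaurentSeries k) :=
    charZero_of_injective_ringHom (HahnSeries.C_injective (Γ := ℤ) (R := k))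
  have hcoeff : ∀ n, v.coeff n ∈ Set.range (algebraMap k L) := by
    intro n
    have halg : IsAlgebraic k (v.coeff n) := by
      by_contra htr
      obtain ⟨D, hD⟩ := exists_derivation_ne_zero (v.coeff n) htr
      refine hD ?_
      have h1 := der_eq_zero_of_algebraic (coeffDer D) (fun e => ?_) v hv
      · rw [← coeffDer_coeff, h1, HahnSeries.coeff_zero]
      · ext i
        rw [hmap, coeffDer_coeff, laurentMap_coeff, Derivation.map_algebraMap,
          HahnSeries.coeff_zero]
    have h2 := halg.isIntegral
    have h3 := IntermediateField.isAlgebraic_adjoin_simple h2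
    obtain ⟨c, hc⟩ := IsAlgClosed.algebraMap_bijective_of_isIntegral (k := k)
      |>.2 (IntermediateField.AdjoinSimple.gen k (v.coeff n))
    exact ⟨c, congrArg Subtype.val hc⟩
  choose g hg using hcoeff
  refine ⟨⟨g, ?_⟩, ?_⟩
  · have : Function.support g = v.support := by
      ext n
      rw [Function.mem_support, HahnSeries.mem_support, ← hg, ne_eq, ne_eq, map_eq_zero]
    rw [this]
    exact v.isPWO_support
  · ext n
    rw [hmap, laurentMap_coeff]
    exact hg n

lemma ringKrullDim_le_of_integral {A B : Type*} [CommRing A] [CommRing B] [Algebra A B]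
    [Algebra.IsIntegral A B] : ringKrullDim B ≤ ringKrullDim A :=
  Order.krullDim_le_of_strictMono (PrimeSpectrum.comap (algebraMap A B)) fun _ _ h =>
    Ideal.IsIntegral.comap_lt_comap h

/-- The dimension of a finitely generated domain is at most the transcendence degree of any field
containing it, by Noether normalization. -/
lemma ringKrullDim_le_of_trdeg_le {k A L : Type*} [Field k] [CommRing A] [IsDomain A] [Algebra k A]
    [Algebra.FiniteType k A] [Field L] [Algebra k L] (h : A →ₐ[k] L) (hinj : Function.Injective h)
    (N : ℕ) (htr : Algebra.trdeg k L ≤ N) : ringKrullDim A ≤ (N : ℕ∞) := by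
  obtain ⟨s, g, hg, hint⟩ := exists_integral_inj_algHom_of_fg k A
  have hs : s ≤ N := by
    have h1 : AlgebraicIndependent k fun i : Fin s => h (g (MvPolynomial.X i)) := by
      have h2 : (MvPolynomial.aeval fun i : Fin s => h (g (MvPolynomial.X i))) = h.comp g := by
        ext; simp
      rw [AlgebraicIndependent, h2]
      exact hinj.comp hg
    have h3 := h1.lift_cardinalMk_le_trdeg.trans (Cardinal.lift_le.mpr htr)
    simpa using h3
  let := g.toRingHom.toAlgebra
  have : Algebra.IsIntegral (MvPolynomial (Fin s) k) A := ⟨hint⟩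
  refine (ringKrullDim_le_of_integral (A := MvPolynomial (Fin s) k) (B := A)).trans ?_
  rw [MvPolynomial.ringKrullDim_of_isNoetherianRing, ringKrullDim_eq_zero_of_field]
  simp only [Nat.card_eq_fintype_card, Fintype.card_fin, zero_add]
  exact_mod_cast hs

/-- The dimension of a ring is bounded by the dimensions of its integral quotients. -/
lemma ringKrullDim_quotient_le_of_forall_prime {R : Type*} [CommRing R] (J : Ideal R)
    (N : WithBot ℕ∞) (H : ∀ P : Ideal R, P.IsPrime → J ≤ P → ringKrullDim (R ⧸ P) ≤ N) :
    ringKrullDim (R ⧸ J) ≤ N := by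
  rw [ringKrullDim_quotient, Order.krullDim_eq_iSup_coheight, iSup_le_iff]
  rintro ⟨P, hP⟩
  rw [Order.coheight_eq_krullDim_Ici]
  refine le_trans ?_ (H P.asIdeal P.2 hP)
  rw [ringKrullDim_quotient]
  refine Order.krullDim_le_of_strictMono (fun Q => ⟨Q.1.1, fun g hg => Q.2 hg⟩) fun Q Q' h => h

/-- Coefficientwise, the value of `f` at the tuple `∑ⱼ Yᵢⱼ tʲ` of series with indeterminate
coefficients. -/
noncomputable def genericValue {σ : Type*} (r : ℕ) (f : MvPolynomial σ (LaurentSeries ℂ)) :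
    LaurentSeries (MvPolynomial (σ × Fin r) ℂ) :=
  f.eval₂ (laurentMap MvPolynomial.C)
    fun i => ∑ j : Fin r, HahnSeries.single (j : ℤ) (MvPolynomial.X (i, j))

lemma laurentMap_genericValue {σ S : Type*} [CommRing S] (r : ℕ)
    (f : MvPolynomial σ (LaurentSeries ℂ)) (ψ : MvPolynomial (σ × Fin r) ℂ →+* S) :
    laurentMap ψ (genericValue r f) = f.eval₂ (laurentMap (ψ.comp MvPolynomial.C))
      fun i => ∑ j : Fin r, HahnSeries.single (j : ℤ) (ψ (MvPolynomial.X (i, j))) := by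
  rw [genericValue, MvPolynomial.hom_eval₂, laurentMap_comp]
  congr 1
  funext i
  rw [map_sum]
  simp only [laurentMap_single]

lemma coeff_sum_single {R : Type*} [CommRing R] {r : ℕ} (a : Fin r → R) (n : ℤ) :
    (∑ j : Fin r, HahnSeries.single (j : ℤ) (a j)).coeff n =
      ∑ j : Fin r, if n = j then a j else 0 := by
  rw [HahnSeries.coeff_sum]
  refine Finset.sum_congr rfl fun j _ => ?_
  rw [HahnSeries.coeff_single]
  congr

/-- The hypersurface case of the main theorem (`motivicBP`) of the paper: if
`X ⊆ 𝔸^n` over `K = ℂ((t))` is the irreducible hypersurface cut out by an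
irreducible polynomial `f` of total degree `d ≥ 1` (so `dim X = n - 1` and
`deg X = d`), then for every `r > 0` the Zariski closure of
`X_r = X(K) ∩ (ℂ[t]_{<r})^n` in `ℂ^{nr}` has dimension at most
`r(n-2) + ⌈r/d⌉`, where `⌈r/d⌉ = (r + d - 1)/d`. -/
theorem motivic_bombieri_pila_hypersurface (n d : ℕ) (hn : 2 ≤ n) (hd : 1 ≤ d)
    (f : MvPolynomial (Fin n) (LaurentSeries ℂ))
    (hirr : Irreducible f) (hdeg : f.totalDegree = d) :
    ∀ r : ℕ, 0 < r →
      ∃ J : Ideal (MvPolynomial (Fin n × Fin r) ℂ),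
        (∀ a : Fin n → Fin r → ℂ,
          MvPolynomial.eval (fun i => seriesOfCoeffs r (a i)) f = 0 →
          ∀ g ∈ J, MvPolynomial.eval (fun q => a q.1 q.2) g = 0) ∧
        ringKrullDim (MvPolynomial (Fin n × Fin r) ℂ ⧸ J)
          ≤ (((r * (n - 2) + (r + d - 1) / d : ℕ) : ℕ∞) : WithBot ℕ∞) := by
  intro r hr
  refine ⟨Ideal.span (Set.range (genericValue r f).coeff), fun a ha g hg => ?_, ?_⟩
  · have hle : Ideal.span (Set.range (genericValue r f).coeff) ≤
        RingHom.ker (MvPolynomial.eval fun q : Fin n × Fin r => a q.1 q.2) := by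
      rw [Ideal.span_le]
      rintro _ ⟨m, rfl⟩
      have h1 := laurentMap_genericValue r f (MvPolynomial.eval fun q : Fin n × Fin r => a q.1 q.2)
      have h2 : (MvPolynomial.eval fun q : Fin n × Fin r => a q.1 q.2).comp MvPolynomial.C =
          RingHom.id ℂ := by
        ext; simp
      have h3 : laurentMap (RingHom.id ℂ) = RingHom.id (LaurentSeries ℂ) := rfl
      simp only [h2, h3, MvPolynomial.eval_X] at h1
      have h4 : laurentMap (MvPolynomial.eval fun q : Fin n × Fin r => a q.1 q.2)
          (genericValue r f) = 0 := h1.trans ha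
      exact congrArg (fun w => w.coeff m) h4
    exact hle hg
  obtain ⟨m, rfl⟩ := Nat.exists_eq_add_of_le' hn
  refine ringKrullDim_quotient_le_of_forall_prime _ _ fun P hP hJP => ?_
  let A := MvPolynomial (Fin (m + 2) × Fin r) ℂ ⧸ P
  let L := FractionRing A
  let h : A →ₐ[ℂ] L := IsScalarTower.toAlgHom ℂ A L
  refine ringKrullDim_le_of_trdeg_le (k := ℂ) (A := A) (L := L) h (IsFractionRing.injective A L) _ ?_
  let : Algebra (LaurentSeries ℂ) (LaurentSeries L) :=
    (laurentMap (algebraMap ℂ L)).toAlgebra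
  have hmap : algebraMap (LaurentSeries ℂ) (LaurentSeries L) = laurentMap (algebraMap ℂ L) := rfl
  let ψ : MvPolynomial (Fin (m + 2) × Fin r) ℂ →ₐ[ℂ] L := h.comp (Ideal.Quotient.mkₐ ℂ P)
  let x : Fin (m + 2) → LaurentSeries L := fun i =>
    ∑ j : Fin r, HahnSeries.single (j : ℤ) (ψ (MvPolynomial.X (i, j)))
  have hx : MvPolynomial.aeval x f = 0 := by
    have h1 := laurentMap_genericValue r f ψ.toRingHom
    have h2 : ψ.toRingHom.comp MvPolynomial.C = algebraMap ℂ L := ψ.comp_algebraMap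
    rw [h2] at h1
    refine Eq.trans (Eq.symm h1) ?_
    ext i
    have h3 : (genericValue r f).coeff i ∈ P := hJP (Ideal.subset_span ⟨i, rfl⟩)
    rw [laurentMap_coeff, HahnSeries.coeff_zero]
    change h (Ideal.Quotient.mk P _) = 0
    rw [Ideal.Quotient.eq_zero_iff_mem.mpr h3, map_zero]
  have hrd : r ≤ (r + d - 1) / d * d := by
    have h1 := Nat.div_add_mod (r + d - 1) d
    have h2 := Nat.mod_lt (r + d - 1) hd
    rw [mul_comm] at h1
    omega
  refine generic_point HahnSeries.C (fun c => ?_) (fun i => ?_)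
    (exists_laurentMap_of_algebraic hmap) (fun D e => ?_) m d r _ hd hr hrd f hirr hdeg x hx ?_ ?_
  · rw [hmap]
    exact laurentMap_single _ _ _
  · refine ⟨HahnSeries.single i 1, ?_⟩
    rw [hmap, laurentMap_single, map_one]
  · ext i
    rw [hmap, coeffDer_coeff, laurentMap_coeff, Derivation.map_algebraMap, HahnSeries.coeff_zero]
  · intro i l hl
    simp only [x, coeff_sum_single]
    refine Finset.sum_eq_zero fun j _ => if_neg ?_
    have := j.2
    omega
  · intro D hD
    have h1 : ∀ q, D (ψ (MvPolynomial.X q)) = 0 := by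
      rintro ⟨i, j⟩
      have h2 := congrArg (fun w => w.coeff (j : ℤ)) (hD i)
      simp only [x, coeffDer_coeff, coeff_sum_single, HahnSeries.coeff_zero] at h2
      rw [Finset.sum_eq_single j] at h2
      · simpa using h2
      · intro j' _ hj'
        exact if_neg fun hjj => hj' (Fin.ext (by exact_mod_cast hjj.symm))
      · simp
    have h2 : ∀ g, D (ψ g) = 0 := by
      intro g
      induction g using MvPolynomial.induction_on with
      | C c =>
        have h3 : ψ (MvPolynomial.C c) = algebraMap ℂ L c := ψ.commutes c
        rw [h3, Derivation.map_algebraMap]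
      | add p q hp hq => rw [map_add, map_add, hp, hq, add_zero]
      | mul_X p q hp => rw [map_mul, Derivation.leibniz, hp, h1, smul_zero, smul_zero, add_zero]
    have h3 : ∀ b : A, D (algebraMap A L b) = 0 := fun b => by
      obtain ⟨g, rfl⟩ := Ideal.Quotient.mk_surjective b
      exact h2 g
    ext w
    obtain ⟨p, q, hq, rfl⟩ := IsFractionRing.div_surjective (A := A) w
    rw [Derivation.leibniz_div, h3, h3]
    simp
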